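/- arXiv:math/0310156 — 2 statements merged into one kernel-verified Lean document; each statement's English description precedes it below -/
import Mathlib

section
/- Let Γ be an n-crystallographic group and let G be a subgroup of Γ. Then G is virtually infinite cyclic if and only if there is at least one line l in ℝⁿ that is left invariant by G (i.e. gl = l for all g ∈ G) and the action of G on l is cocompact (i.e. the quotient l/G is compact). -/
noncomputable section

/-- Euclidean `n`-space. -/
abbrev E (n : ℕ) := EuclideanSpace ℝ (Fin n)

/-- The isometry group of Euclidean `n`-space (which equals `O(n) ⋉ ℝⁿ`). -/
abbrev Isom (n : ℕ) := E n ≃ᵢ E n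

/-- A subgroup of the isometry group of `ℝⁿ` is `n`-crystallographic if its action on `ℝⁿ`
is properly discontinuous and cocompact. -/
def IsCrystallographic {n : ℕ} (Γ : Subgroup (Isom n)) : Prop :=
  (∀ K L : Set (E n), IsCompact K → IsCompact L →
      {γ : Isom n | γ ∈ Γ ∧ (γ '' K ∩ L).Nonempty}.Finite) ∧
  ∃ K : Set (E n), IsCompact K ∧ ∀ x : E n, ∃ γ ∈ Γ, γ x ∈ K

/-- A line in `ℝⁿ`: a one-dimensional affine subspace. -/
def IsLine {n : ℕ} (l : Set (E n)) : Prop :=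
  ∃ p v : E n, v ≠ 0 ∧ l = {x | ∃ t : ℝ, x = p + t • v}

/-- A group is virtually infinite cyclic if it contains an infinite cyclic subgroup of
finite index. -/
def IsVirtuallyInfiniteCyclic (G : Type*) [Group G] : Prop :=
  ∃ H : Subgroup G, H.FiniteIndex ∧ Nonempty (H ≃* Multiplicative ℤ)

/-!
All displacement vectors of an isometry `g` with linear part `L` have the same component `v`
orthogonal to the range of `L - 1`. It is fixed by `L`, and it is itself the displacement of some
point. When `g` has infinite order, proper discontinuity makes `v` nonzero, so `g` translates a line
by `v`. Since `v` depends only on `g`, it is equivariant under conjugation and multiplicative on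
powers. So when `⟨g⟩` has finite index every linear part preserves `ℝv`, and averaging an orbit over
the cosets of `⟨g⟩` gives a point whose orbit stays on a line parallel to `v`.

Conversely, a cocompact invariant line contains infinite orbits, so some element translates it.
Every coset of the subgroup it generates carries a given point of the line into one fundamental
segment of the translation, so proper discontinuity leaves only finitely many cosets.
-/

open scoped Pointwise

section VirtuallyInfiniteCyclic

variable {G : Type*} [Group G]

lemma isVirtuallyInfiniteCyclic_iff_exists_zpowers :
    IsVirtuallyInfiniteCyclic G ↔
      ∃ g : G, ¬IsOfFinOrder g ∧ (Subgroup.zpowers g).FiniteIndex := by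
  constructor
  · rintro ⟨H, hH, ⟨e⟩⟩
    have : IsCyclic H := isCyclic_of_surjective e.symm e.symm.surjective
    obtain ⟨g, rfl⟩ := H.isCyclic_iff_exists_zpowers_eq_top.1 this
    refine ⟨g, fun hg => ?_, hH⟩
    have : Finite (Subgroup.zpowers g) := finite_zpowers.2 hg
    exact not_finite_iff_infinite.2 (inferInstanceAs (Infinite ℤ)) (Finite.of_equiv _ e.toEquiv)
  · rintro ⟨g, hg, hfin⟩
    refine ⟨Subgroup.zpowers g, hfin, ⟨mulEquivOfCyclicCardEq ?_⟩⟩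
    rw [Nat.card_zpowers, orderOf_eq_zero hg]
    exact (Nat.card_eq_zero_of_infinite (α := ℤ)).symm

end VirtuallyInfiniteCyclic

section ProperlyDiscontinuous

variable {G X : Type*} [TopologicalSpace X]

lemma finite_setOf_smul_mem [SMul G X] [ProperlyDiscontinuousSMul G X] {K : Set X}
    (hK : IsCompact K) (x : X) : {g : G | g • x ∈ K}.Finite := by
  simpa using ProperlyDiscontinuousSMul.finite_disjoint_inter_image (Γ := G)
    (isCompact_singleton (x := x)) hK

variable [Group G] [MulAction G X] [ProperlyDiscontinuousSMul G X]

lemma isOfFinOrder_of_smul_eq_self {g : G} {x : X} (hg : g • x = x) : IsOfFinOrder g := by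
  refine finite_zpowers.1 ((finite_setOf_smul_mem (isCompact_singleton (x := x)) x).subset ?_)
  exact (Subgroup.zpowers_le (H := MulAction.stabilizer G x)).2 hg

lemma finiteIndex_of_forall_orbit_exists_smul_mem (H : Subgroup G) {x : X} {K : Set X}
    (hK : IsCompact K) (hHK : ∀ y ∈ MulAction.orbit G x, ∃ h ∈ H, h • y ∈ K) :
    H.FiniteIndex := by
  have : Finite {g : G | g • x ∈ K} := finite_setOf_smul_mem hK x
  let coset (g : {g : G | g • x ∈ K}) : G ⧸ H := ((g : G)⁻¹ : G)
  have hcoset : Function.Surjective coset := by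
    intro c
    obtain ⟨a, rfl⟩ := QuotientGroup.mk_surjective c
    obtain ⟨h, hH, hK⟩ := hHK (a⁻¹ • x) ⟨a⁻¹, rfl⟩
    refine ⟨⟨h * a⁻¹, by rwa [Set.mem_ofPred_eq, mul_smul]⟩, QuotientGroup.eq.2 ?_⟩
    simpa using hH
  have := Finite.of_surjective coset hcoset
  exact Subgroup.finiteIndex_of_finite_quotient

end ProperlyDiscontinuous

lemma infinite_orbit_of_not_isBounded {G X : Type*} [PseudoMetricSpace X] [Group G] [MulAction G X]
    [IsIsometricSMul G X] {S K : Set X} (hS : ¬Bornology.IsBounded S)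
    (hK : Bornology.IsBounded K) (hSK : ∀ x ∈ S, ∃ g : G, g • x ∈ K) (p : X) :
    (MulAction.orbit G p).Infinite := by
  intro hfin
  obtain ⟨R, hR⟩ := hK.subset_closedBall p
  refine hS ((hfin.isBounded.cthickening (δ := R)).subset fun x hx => ?_)
  obtain ⟨g, hg⟩ := hSK x hx
  refine Metric.mem_cthickening_of_dist_le x (g⁻¹ • p) R _ ⟨g⁻¹, rfl⟩ ?_
  rw [← dist_smul g, smul_inv_smul]
  exact hR hg

section LinearIsometry

lemma mem_orthogonal_range_sub_id_iff {𝕜 V : Type*} [RCLike 𝕜] [NormedAddCommGroup V]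
    [InnerProductSpace 𝕜 V] (L : V →ₗᵢ[𝕜] V) {w : V} :
    w ∈ (LinearMap.range (L.toLinearMap - LinearMap.id))ᗮ ↔ L w = w := by
  rw [Submodule.mem_orthogonal]
  constructor
  · intro hw
    have h : inner 𝕜 (L w - w) w = 0 := hw _ ⟨w, rfl⟩
    rw [inner_sub_left, sub_eq_zero] at h
    rw [← sub_eq_zero, ← inner_self_eq_zero (𝕜 := 𝕜), inner_sub_sub_self, L.inner_map_map, h,
      ← inner_conj_symm w (L w), h, inner_self_conj]
    ring
  · rintro hw _ ⟨u, rfl⟩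
    calc inner 𝕜 (L u - u) w = inner 𝕜 (L u) (L w) - inner 𝕜 u w := by rw [inner_sub_left, hw]
      _ = 0 := by rw [L.inner_map_map, sub_self]

lemma eq_self_or_eq_neg_of_finrank_eq_one {V : Type*} [NormedAddCommGroup V] [NormedSpace ℝ V]
    (L : V →ₗᵢ[ℝ] V) {W : Submodule ℝ V} (hW : Module.finrank ℝ W = 1)
    (hL : ∀ w ∈ W, L w ∈ W) : (∀ w ∈ W, L w = w) ∨ (∀ w ∈ W, L w = -w) := by
  obtain ⟨v, hv, hspan⟩ := finrank_eq_one_iff'.1 hW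
  obtain ⟨c, hc⟩ := hspan ⟨L v, hL v v.2⟩
  replace hc : L v = c • (v : V) := congrArg Subtype.val hc.symm
  have hLc (w) (hw : w ∈ W) : L w = c • w := by
    obtain ⟨t, ht⟩ := hspan ⟨w, hw⟩
    rw [← show t • (v : V) = w from congrArg Subtype.val ht, map_smul, hc, smul_comm]
  have hcabs : |c| = 1 := by
    have hnorm := L.norm_map v
    rw [hc, norm_smul, Real.norm_eq_abs] at hnorm
    exact (mul_eq_right₀ (norm_ne_zero_iff.2 (by simpa using hv))).1 hnorm
  refine (eq_or_eq_neg_of_abs_eq hcabs).imp ?_ ?_ <;> rintro rfl w hw <;> simp [hLc w hw]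

end LinearIsometry

section AffineSubspace

variable {k V P : Type*} [AddCommGroup V] [AddTorsor V P]

lemma affineSegment_subset_of_mem [Ring k] [PartialOrder k] [Module k V] {l : AffineSubspace k P}
    {p q : P} (hp : p ∈ l) (hq : q ∈ l) : affineSegment k p q ⊆ l := by
  rintro _ ⟨t, -, rfl⟩
  exact AffineMap.lineMap_mem t hp hq

variable [DivisionRing k] [Module k V]

lemma centroid_vsub_centroid_mem {ι : Type*} {W : Submodule k V} {s : Finset ι} {x y : ι → P}
    (h : ∀ i ∈ s, x i -ᵥ y i ∈ W) : s.centroid k x -ᵥ s.centroid k y ∈ W := by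
  rw [Finset.centroid_def, Finset.centroid_def, ← Finset.sum_smul_vsub_eq_affineCombination_vsub]
  exact W.sum_mem fun i hi => W.smul_mem _ (h i hi)

lemma nonempty_of_direction_ne_bot {l : AffineSubspace k P} (hl : l.direction ≠ ⊥) :
    (l : Set P).Nonempty :=
  (AffineSubspace.nonempty_iff_ne_bot l).2 fun h => hl (h ▸ AffineSubspace.direction_bot ..)

lemma eq_mk'_span_singleton {l : AffineSubspace k P} (hdim : Module.finrank k l.direction = 1)
    {p : P} (hp : p ∈ l) {v : V} (hv : v ∈ l.direction) (hv0 : v ≠ 0) :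
    l = AffineSubspace.mk' p (k ∙ v) := by
  have := Module.finite_of_finrank_eq_succ hdim
  have hspan : k ∙ v = l.direction :=
    Submodule.eq_of_le_of_finrank_eq ((Submodule.span_singleton_le_iff_mem v _).2 hv)
      (by rw [finrank_span_singleton hv0, hdim])
  rw [hspan, AffineSubspace.mk'_eq hp]

lemma finrank_direction_eq_one_iff {l : AffineSubspace k P} :
    Module.finrank k l.direction = 1 ↔
      ∃ (p : P) (v : V), v ≠ 0 ∧ l = AffineSubspace.mk' p (k ∙ v) := by
  constructor
  · intro hdim
    obtain ⟨v, hv, -⟩ := finrank_eq_one_iff'.1 hdim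
    have hv0 : (v : V) ≠ 0 := by simpa using hv
    obtain ⟨p, hp⟩ := nonempty_of_direction_ne_bot (Submodule.ne_bot_iff _ |>.2 ⟨v.1, v.2, hv0⟩)
    exact ⟨p, v, hv0, eq_mk'_span_singleton hdim hp v.2 hv0⟩
  · rintro ⟨p, v, hv, rfl⟩
    rw [AffineSubspace.direction_mk', finrank_span_singleton hv]

end AffineSubspace

section NormedAffineSpace

variable {V P : Type*} [NormedAddCommGroup V] [NormedSpace ℝ V] [MetricSpace P]
  [NormedAddTorsor V P]

lemma isCompact_affineSegment (p q : P) : IsCompact (affineSegment ℝ p q) :=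
  isCompact_Icc.image AffineMap.lineMap_continuous

lemma not_isBounded_of_direction_ne_bot {l : AffineSubspace ℝ P} (hl : l.direction ≠ ⊥) :
    ¬Bornology.IsBounded (l : Set P) := by
  obtain ⟨p, hp⟩ := nonempty_of_direction_ne_bot hl
  have := Submodule.nontrivial_iff_ne_bot.2 hl
  have hisom : Isometry fun w : l.direction => (w : V) +ᵥ p :=
    (IsometryEquiv.vaddConst p).isometry.comp isometry_subtype_coe
  refine fun hbdd => NormedSpace.unbounded_univ ℝ l.direction
    ((hisom.antilipschitz.isBounded_preimage hbdd).subset fun w _ => ?_)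
  exact AffineSubspace.vadd_mem_of_mem_direction w.2 hp

end NormedAffineSpace

section LinearPart

variable {G V : Type*} (P : Type*) [Group G] [NormedAddCommGroup V] [NormedSpace ℝ V]
  [MetricSpace P] [NormedAddTorsor V P] [MulAction G P] [IsIsometricSMul G P]

/-- An isometric action on a normed affine space as an action by affine isometries, which it is by
the Mazur–Ulam theorem. -/
def smulAffineIsometry : G →* (P ≃ᵃⁱ[ℝ] P) where
  toFun g := (IsometryEquiv.constSMul g).toRealAffineIsometryEquiv
  map_one' := AffineIsometryEquiv.ext fun x => one_smul G x
  map_mul' g h := AffineIsometryEquiv.ext fun x => mul_smul g h x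

/-- The linear part of an isometric action on a normed affine space. -/
def linearPart : G →* (V ≃ₗᵢ[ℝ] V) where
  toFun g := (smulAffineIsometry P g).linearIsometryEquiv
  map_one' := by rw [map_one]; rfl
  map_mul' g h := by rw [map_mul]; rfl

variable {P}

lemma smul_vadd_eq_linearPart_vadd (g : G) (v : V) (x : P) :
    g • (v +ᵥ x) = linearPart P g v +ᵥ g • x :=
  (smulAffineIsometry P g).map_vadd x v

lemma linearPart_vsub (g : G) (x y : P) : linearPart P g (x -ᵥ y) = g • x -ᵥ g • y :=
  (smulAffineIsometry P g).map_vsub x y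

lemma linearPart_mem_direction {l : AffineSubspace ℝ P} {g : G} (hg : g • (l : Set P) = l)
    {v : V} (hv : v ∈ l.direction) : linearPart P g v ∈ l.direction := by
  rcases (l : Set P).eq_empty_or_nonempty with hl | hl
  · simp_all
  have hmem {x : P} (hx : x ∈ l) : g • x ∈ l := hg.subset (Set.smul_mem_smul_set hx)
  obtain ⟨x, hx, y, hy, rfl⟩ := (AffineSubspace.mem_direction_iff_eq_vsub hl v).1 hv
  rw [linearPart_vsub]
  exact l.vsub_mem_direction (hmem hx) (hmem hy)

lemma smul_set_mk'_eq {W : Submodule ℝ V} (hW : ∀ (g : G), ∀ w ∈ W, linearPart P g w ∈ W) {q : P}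
    (hq : ∀ g : G, g • q -ᵥ q ∈ W) (g : G) :
    g • (AffineSubspace.mk' q W : Set P) = AffineSubspace.mk' q W := by
  have hsub (a : G) : a • (AffineSubspace.mk' q W : Set P) ⊆ AffineSubspace.mk' q W := by
    rintro _ ⟨x, hx, rfl⟩
    rw [SetLike.mem_coe, AffineSubspace.mem_mk'] at hx ⊢
    rw [← vsub_add_vsub_cancel _ (a • q), ← linearPart_vsub]
    exact W.add_mem (hW a _ hx) (hq a)
  exact (hsub g).antisymm (Set.subset_smul_set_iff.2 (hsub g⁻¹))

lemma smul_centroid {ι : Type*} (g : G) {s : Finset ι} (hs : s.Nonempty) (x : ι → P) :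
    g • s.centroid ℝ x = s.centroid ℝ fun i => g • x i :=
  s.map_affineCombination x _ (s.sum_centroidWeights_eq_one_of_nonempty ℝ hs)
    (smulAffineIsometry P g).toAffineEquiv.toAffineMap

lemma exists_forall_smul_vsub_mem {W : Submodule ℝ V}
    (hW : ∀ (g : G), ∀ w ∈ W, linearPart P g w ∈ W) (H : Subgroup G) [H.FiniteIndex] {p : P}
    (hp : ∀ h ∈ H, h • p -ᵥ p ∈ W) :
    ∃ q : P, ∀ g : G, g • q -ᵥ q ∈ W := by
  have := Fintype.ofFinite (G ⧸ H)
  let x (c : G ⧸ H) : P := c.out • p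
  have hx (g : G) (c : G ⧸ H) : g • x c -ᵥ x (g • c) ∈ W := by
    have hmem : (g • c).out⁻¹ * (g * c.out) ∈ H := by
      rw [← QuotientGroup.eq, QuotientGroup.out_eq', ← smul_eq_mul, ← MulAction.Quotient.smul_mk,
        QuotientGroup.out_eq']
    simpa [linearPart_vsub, x, mul_smul] using hW (g • c).out _ (hp _ hmem)
  refine ⟨Finset.univ.centroid ℝ x, fun g => ?_⟩
  have hperm : Finset.univ.centroid ℝ x = Finset.univ.centroid ℝ fun c => x (g • c) := by
    have h := Finset.univ.centroid_map ℝ (MulAction.toPerm g : Equiv.Perm (G ⧸ H)).toEmbedding x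
    rwa [Finset.map_univ_equiv] at h
  rw [smul_centroid g Finset.univ_nonempty, hperm]
  exact centroid_vsub_centroid_mem fun c _ => hx g c

end LinearPart

section TranslatesLine

variable {G V P : Type*} [Group G] [NormedAddCommGroup V] [MetricSpace P]

/-- `g` acts on `p + ℝv` as the translation by `v`. The vector `v` may vanish, in which case this
says that `g` fixes `p`. -/
structure TranslatesLine [NormedSpace ℝ V] [NormedAddTorsor V P] [MulAction G P]
    [IsIsometricSMul G P] (g : G) (p : P) (v : V) : Prop where
  linearPart_eq : linearPart P g v = v
  smul_eq : g • p = v +ᵥ p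

namespace TranslatesLine

section NormedSpace

variable [NormedSpace ℝ V] [NormedAddTorsor V P] [MulAction G P] [IsIsometricSMul G P]
  {g h : G} {p : P} {v : V}

lemma inv (hg : TranslatesLine g p v) : TranslatesLine g⁻¹ p (-v) where
  linearPart_eq := by
    rw [map_inv, map_neg, LinearIsometryEquiv.coe_inv, neg_inj,
      LinearIsometryEquiv.symm_apply_eq, hg.linearPart_eq]
  smul_eq := by
    rw [inv_smul_eq_iff, smul_vadd_eq_linearPart_vadd, map_neg, hg.linearPart_eq, hg.smul_eq,
      neg_vadd_vadd]

lemma linearPart_zpow_eq (hg : TranslatesLine g p v) (k : ℤ) : linearPart P (g ^ k) v = v := by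
  induction k with
  | zero => simp
  | succ k ih => rw [zpow_add_one, map_mul, LinearIsometryEquiv.coe_mul, Function.comp_apply,
      hg.linearPart_eq, ih]
  | pred k ih => rw [zpow_sub_one, map_mul, LinearIsometryEquiv.coe_mul, Function.comp_apply,
      ← neg_inj, ← map_neg, ← map_neg, hg.inv.linearPart_eq, map_neg, ih]

lemma zpow (hg : TranslatesLine g p v) (k : ℤ) : TranslatesLine (g ^ k) p (k • v) where
  linearPart_eq := by rw [map_zsmul, hg.linearPart_zpow_eq]
  smul_eq := by
    induction k with
    | zero => simp
    | succ k ih =>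
      rw [zpow_add_one, mul_smul, hg.smul_eq, smul_vadd_eq_linearPart_vadd, hg.linearPart_zpow_eq,
        ih, vadd_vadd, add_zsmul, one_zsmul, add_comm]
    | pred k ih =>
      rw [zpow_sub_one, mul_smul, hg.inv.smul_eq, smul_vadd_eq_linearPart_vadd, map_neg,
        hg.linearPart_zpow_eq, ih, vadd_vadd, sub_eq_add_neg, add_zsmul, neg_one_zsmul, add_comm]

lemma conj (hh : TranslatesLine h p v) (g : G) :
    TranslatesLine (g * h * g⁻¹) (g • p) (linearPart P g v) where
  linearPart_eq := by simp [hh.linearPart_eq]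
  smul_eq := by simp [mul_smul, hh.smul_eq, smul_vadd_eq_linearPart_vadd]

lemma not_isOfFinOrder (hg : TranslatesLine g p v) (hv : v ≠ 0) : ¬IsOfFinOrder g := by
  intro hfin
  obtain ⟨n, hn, hgn⟩ := isOfFinOrder_iff_pow_eq_one.1 hfin
  have hnv : (n : ℝ) • v +ᵥ p = p := by
    simpa [hgn, Nat.cast_smul_eq_nsmul] using (hg.zpow n).smul_eq.symm
  have hnv0 := vadd_right_cancel p (hnv.trans (zero_vadd V p).symm)
  exact (smul_eq_zero.1 hnv0).elim (Nat.cast_ne_zero.2 hn.ne') hv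

lemma exists_zpow_smul_mem_affineSegment (hg : TranslatesLine g p v) {x : P}
    (hx : x ∈ AffineSubspace.mk' p (ℝ ∙ v)) :
    ∃ k : ℤ, g ^ k • x ∈ affineSegment ℝ p (v +ᵥ p) := by
  obtain ⟨t, ht⟩ := Submodule.mem_span_singleton.1 (AffineSubspace.mem_mk'.1 hx)
  refine ⟨-⌊t⌋, Int.fract t, ⟨Int.fract_nonneg t, (Int.fract_lt_one t).le⟩, ?_⟩
  rw [← vsub_vadd x p, ← ht, smul_vadd_eq_linearPart_vadd, map_smul, hg.linearPart_zpow_eq,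
    (hg.zpow _).smul_eq, vadd_vadd, AffineMap.lineMap_apply, vadd_vsub, ← Int.self_sub_floor,
    sub_smul, neg_zsmul, Int.cast_smul_eq_zsmul, sub_eq_add_neg]

end NormedSpace

section InnerProductSpace

variable [InnerProductSpace ℝ V] [NormedAddTorsor V P] [MulAction G P] [IsIsometricSMul G P]

lemma vector_unique {g : G} {p q : P} {v w : V} (hp : TranslatesLine g p v)
    (hq : TranslatesLine g q w) : v = w := by
  have hfix : linearPart P g (v - w) = v - w := by
    rw [map_sub, hp.linearPart_eq, hq.linearPart_eq]
  have hrange : linearPart P g (p -ᵥ q) - (p -ᵥ q) = v - w := by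
    rw [linearPart_vsub, hp.smul_eq, hq.smul_eq, vadd_vsub_vadd_comm, add_sub_cancel_right]
  rw [← sub_eq_zero, ← inner_self_eq_zero (𝕜 := ℝ)]
  exact (mem_orthogonal_range_sub_id_iff (linearPart P g).toLinearIsometry).2 hfix _
    ⟨p -ᵥ q, hrange⟩

lemma linearPart_mem_span_of_finiteIndex_zpowers {g : G} {p : P} {v : V}
    (hg : TranslatesLine g p v) (hfin : (Subgroup.zpowers g).FiniteIndex) (a : G) :
    linearPart P a v ∈ ℝ ∙ v := by
  obtain ⟨m, hm, -, k, hk⟩ :=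
    Subgroup.exists_pow_mem_of_index_ne_zero hfin.index_ne_zero (a * g * a⁻¹)
  have hconj : TranslatesLine (g ^ k) (a • p) ((m : ℤ) • linearPart P a v) := by
    rw [show g ^ k = (a * g * a⁻¹) ^ (m : ℤ) from hk.trans (zpow_natCast _ m).symm]
    exact (hg.conj a).zpow m
  have hm0 : (m : ℝ) ≠ 0 := Nat.cast_ne_zero.2 hm.ne'
  rw [← Submodule.smul_mem_iff _ hm0, Nat.cast_smul_eq_nsmul, ← natCast_zsmul,
    hconj.vector_unique (hg.zpow k)]
  exact zsmul_mem (Submodule.mem_span_singleton_self v) k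

end InnerProductSpace

end TranslatesLine

variable [NormedSpace ℝ V] [NormedAddTorsor V P] [MulAction G P] [IsIsometricSMul G P]

lemma exists_translatesLine_of_infinite_orbit {l : AffineSubspace ℝ P}
    (hdim : Module.finrank ℝ l.direction = 1) (hl : ∀ g : G, g • (l : Set P) = l) {p : P}
    (hp : p ∈ l) (horb : (MulAction.orbit G p).Infinite) :
    ∃ (g : G) (q : P) (w : V), q ∈ l ∧ w ∈ l.direction ∧ w ≠ 0 ∧ TranslatesLine g q w := by
  have hmem (g : G) {q : P} (hq : q ∈ l) : g • q ∈ l := (hl g).subset (Set.smul_mem_smul_set hq)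
  suffices ∃ (g : G) (q : P), q ∈ l ∧ g • q ≠ q ∧ ∀ w ∈ l.direction, linearPart P g w = w by
    obtain ⟨g, q, hq, hne, hg⟩ := this
    have hw : g • q -ᵥ q ∈ l.direction := l.vsub_mem_direction (hmem g hq) hq
    exact ⟨g, q, _, hq, hw, vsub_ne_zero.2 hne, hg _ hw, (vsub_vadd _ _).symm⟩
  have hsign (g : G) : (∀ w ∈ l.direction, linearPart P g w = w) ∨
      ∀ w ∈ l.direction, linearPart P g w = -w :=
    eq_self_or_eq_neg_of_finrank_eq_one (linearPart P g).toLinearIsometry hdim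
      fun _ => linearPart_mem_direction (hl g)
  obtain ⟨_, ⟨g, rfl⟩, hgp⟩ := horb.exists_notMem_finite (Set.finite_singleton p)
  obtain ⟨_, ⟨h, rfl⟩, hhp⟩ := horb.exists_notMem_finite (Set.toFinite {p, g • p})
  simp only [Set.mem_insert_iff, Set.mem_singleton_iff, not_or] at hgp hhp
  rcases hsign g with hg | hg
  · exact ⟨g, p, hp, hgp, hg⟩
  rcases hsign h with hh | hh
  · exact ⟨h, p, hp, hhp.1, hh⟩
  -- If `g` and `h` both reverse `l`, then `h * g⁻¹` preserves its orientation.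
  refine ⟨h * g⁻¹, g • p, hmem g hp, ?_, fun w hw => ?_⟩
  · rw [smul_smul, inv_mul_cancel_right]
    exact hhp.2
  · have hginv : linearPart P g⁻¹ w = -w := by
      rw [map_inv, LinearIsometryEquiv.coe_inv, LinearIsometryEquiv.symm_apply_eq,
        hg _ (neg_mem hw), neg_neg]
    rw [map_mul, LinearIsometryEquiv.coe_mul, Function.comp_apply, hginv, hh _ (neg_mem hw),
      neg_neg]

lemma exists_translatesLine_of_cocompact {l : AffineSubspace ℝ P}
    (hdim : Module.finrank ℝ l.direction = 1) (hl : ∀ g : G, g • (l : Set P) = l) {K : Set P}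
    (hK : IsCompact K) (hKl : ∀ x ∈ l, ∃ g : G, g • x ∈ K) :
    ∃ (g : G) (q : P) (w : V), q ∈ l ∧ w ∈ l.direction ∧ w ≠ 0 ∧ TranslatesLine g q w := by
  have hne := Submodule.nontrivial_iff_ne_bot.1 (Module.nontrivial_of_finrank_eq_succ hdim)
  obtain ⟨p, hp⟩ := nonempty_of_direction_ne_bot hne
  exact exists_translatesLine_of_infinite_orbit hdim hl hp
    (infinite_orbit_of_not_isBounded (not_isBounded_of_direction_ne_bot hne) hK.isBounded hKl p)

lemma TranslatesLine.finiteIndex_zpowers [ProperlyDiscontinuousSMul G P] {g : G} {q : P} {w : V}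
    (hg : TranslatesLine g q w)
    (horb : MulAction.orbit G q ⊆ AffineSubspace.mk' q (ℝ ∙ w)) :
    (Subgroup.zpowers g).FiniteIndex := by
  refine finiteIndex_of_forall_orbit_exists_smul_mem _ (x := q) (isCompact_affineSegment q (w +ᵥ q))
    fun y hy => ?_
  obtain ⟨k, hk⟩ := hg.exists_zpow_smul_mem_affineSegment (horb hy)
  exact ⟨g ^ k, ⟨k, rfl⟩, hk⟩

end TranslatesLine

section Euclidean

variable {G V P : Type*} [Group G] [NormedAddCommGroup V] [InnerProductSpace ℝ V]
  [FiniteDimensional ℝ V] [MetricSpace P] [NormedAddTorsor V P] [MulAction G P]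
  [IsIsometricSMul G P]

lemma exists_translatesLine (g : G) : ∃ (p : P) (v : V), TranslatesLine g p v := by
  let o : P := Classical.arbitrary P
  let L := (linearPart P g).toLinearIsometry
  obtain ⟨_, ⟨u, rfl⟩, v, hv, ho⟩ :=
    (LinearMap.range (L.toLinearMap - LinearMap.id)).exists_add_mem_mem_orthogonal (g • o -ᵥ o)
  replace ho : g • o = (linearPart P g u - u + v) +ᵥ o := (eq_vadd_iff_vsub_eq _ _ _).2 ho
  refine ⟨-u +ᵥ o, v, (mem_orthogonal_range_sub_id_iff L).1 hv, ?_⟩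
  rw [smul_vadd_eq_linearPart_vadd, map_neg, ho, vadd_vadd, vadd_vadd]
  congr 1
  abel

variable [ProperlyDiscontinuousSMul G P]

lemma exists_invariant_line_of_finiteIndex_zpowers {g : G} (hg : ¬IsOfFinOrder g)
    (hfin : (Subgroup.zpowers g).FiniteIndex) :
    ∃ (q : P) (v : V), v ≠ 0 ∧ TranslatesLine g q v ∧
      ∀ a : G, a • (AffineSubspace.mk' q (ℝ ∙ v) : Set P) = AffineSubspace.mk' q (ℝ ∙ v) := by
  obtain ⟨p, v, hp⟩ := exists_translatesLine (P := P) g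
  have hv : v ≠ 0 := by
    rintro rfl
    exact hg (isOfFinOrder_of_smul_eq_self (hp.smul_eq.trans (zero_vadd V p)))
  have hW (a : G) (w : V) (hw : w ∈ ℝ ∙ v) : linearPart P a w ∈ ℝ ∙ v := by
    obtain ⟨c, rfl⟩ := Submodule.mem_span_singleton.1 hw
    rw [map_smul]
    exact Submodule.smul_mem _ c (hp.linearPart_mem_span_of_finiteIndex_zpowers hfin a)
  obtain ⟨q, hq⟩ := exists_forall_smul_vsub_mem hW (Subgroup.zpowers g) (p := p) <| by
    rintro _ ⟨k, rfl⟩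
    rw [(hp.zpow k).smul_eq, vadd_vsub]
    exact zsmul_mem (Submodule.mem_span_singleton_self v) k
  have hgq : TranslatesLine g q (g • q -ᵥ q) := by
    obtain ⟨c, hc⟩ := Submodule.mem_span_singleton.1 (hq g)
    exact ⟨by rw [← hc, map_smul, hp.linearPart_eq], (vsub_vadd _ _).symm⟩
  exact ⟨q, v, hv, hgq.vector_unique hp ▸ hgq, smul_set_mk'_eq hW hq⟩

theorem virtuallyInfiniteCyclic_iff_invariant_line_general :
    IsVirtuallyInfiniteCyclic G ↔
      ∃ l : AffineSubspace ℝ P, Module.finrank ℝ l.direction = 1 ∧ (∀ g : G, g • (l : Set P) = l) ∧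
        ∃ K : Set P, IsCompact K ∧ K ⊆ l ∧ ∀ x ∈ l, ∃ g : G, g • x ∈ K := by
  rw [isVirtuallyInfiniteCyclic_iff_exists_zpowers]
  constructor
  · rintro ⟨g, hg, hfin⟩
    obtain ⟨q, v, hv, hgq, hinv⟩ := exists_invariant_line_of_finiteIndex_zpowers (P := P) hg hfin
    refine ⟨.mk' q (ℝ ∙ v), ?_, hinv, affineSegment ℝ q (v +ᵥ q),
      isCompact_affineSegment q _, ?_, fun x hx => ?_⟩
    · exact finrank_direction_eq_one_iff.2 ⟨q, v, hv, rfl⟩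
    · exact affineSegment_subset_of_mem (AffineSubspace.self_mem_mk' q _)
        (AffineSubspace.vadd_mem_mk' q (Submodule.mem_span_singleton_self v))
    · obtain ⟨k, hk⟩ := hgq.exists_zpow_smul_mem_affineSegment hx
      exact ⟨g ^ k, hk⟩
  · rintro ⟨l, hdim, hl, K, hK, -, hKl⟩
    obtain ⟨g, q, w, hq, hw, hw0, hgq⟩ := exists_translatesLine_of_cocompact hdim hl hK hKl
    refine ⟨g, hgq.not_isOfFinOrder hw0, hgq.finiteIndex_zpowers ?_⟩
    rw [← eq_mk'_span_singleton hdim hq hw hw0]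
    rintro _ ⟨a, rfl⟩
    exact (hl a).subset (Set.smul_mem_smul_set hq)

end Euclidean

section Isometries

variable {X : Type*} [PseudoEMetricSpace X]

/-- The tautological action of the isometry group of `X` on `X`. -/
instance isometryEquivMulAction : MulAction (X ≃ᵢ X) X where
  smul f x := f x
  one_smul _ := rfl
  mul_smul _ _ _ := rfl

lemma isometryEquiv_smul_def (f : X ≃ᵢ X) (x : X) : f • x = f x := rfl

instance isIsometricSMul_subgroup_isometryEquiv (G : Subgroup (X ≃ᵢ X)) : IsIsometricSMul G X where
  isometry_smul γ := (γ : X ≃ᵢ X).isometry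

end Isometries

lemma properlyDiscontinuousSMul_of_le_isCrystallographic {n : ℕ} {Γ G : Subgroup (Isom n)}
    (hΓ : IsCrystallographic Γ) (hG : G ≤ Γ) : ProperlyDiscontinuousSMul G (E n) where
  finite_disjoint_inter_image hK hL :=
    ((hΓ.1 _ _ hK hL).preimage Subtype.val_injective.injOn).subset fun γ hγ => ⟨hG γ.2, hγ⟩

lemma isLine_iff_exists_affineSubspace {n : ℕ} {l : Set (E n)} :
    IsLine l ↔
      ∃ s : AffineSubspace ℝ (E n), Module.finrank ℝ s.direction = 1 ∧ (s : Set (E n)) = l := by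
  have hmk (p v : E n) :
      (AffineSubspace.mk' p (ℝ ∙ v) : Set (E n)) = {x | ∃ t : ℝ, x = p + t • v} := by
    ext x
    simp [Submodule.mem_span_singleton, eq_sub_iff_add_eq, add_comm, eq_comm]
  simp only [finrank_direction_eq_one_iff]
  constructor
  · rintro ⟨p, v, hv, rfl⟩
    exact ⟨_, ⟨p, v, hv, rfl⟩, hmk p v⟩
  · rintro ⟨_, ⟨p, v, hv, rfl⟩, rfl⟩
    exact ⟨p, v, hv, hmk p v⟩

/-- Proposition 1.1. Let `Γ` be an `n`-crystallographic group and `G ≤ Γ`.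
Then `G` is virtually infinite cyclic iff there is a line `l` in `ℝⁿ` left invariant by `G`
on which the action of `G` is cocompact. -/
theorem virtuallyInfiniteCyclic_iff_invariant_line {n : ℕ}
    (Γ : Subgroup (Isom n)) (hΓ : IsCrystallographic Γ)
    (G : Subgroup (Isom n)) (hG : G ≤ Γ) :
    IsVirtuallyInfiniteCyclic G ↔
      ∃ l : Set (E n), IsLine l ∧ (∀ γ ∈ G, γ '' l = l) ∧
        ∃ K : Set (E n), IsCompact K ∧ K ⊆ l ∧ ∀ x ∈ l, ∃ γ ∈ G, γ x ∈ K := by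
  have := properlyDiscontinuousSMul_of_le_isCrystallographic hΓ hG
  rw [virtuallyInfiniteCyclic_iff_invariant_line_general (P := E n)]
  simp only [isLine_iff_exists_affineSubspace, exists_exists_and_eq_and, Subtype.forall,
    Subtype.exists, Subgroup.mk_smul, ← Set.image_smul, isometryEquiv_smul_def, exists_prop,
    SetLike.mem_coe]
end
end

section
/- Let Γ be a 3-crystallographic group and let G ≤ Γ be a subgroup that leaves invariant a line l in ℝ³ and has a dihedral cocompact action on l (G acts on l by translations and reflections, with some element reversing orientation). Then G is isomorphic to an amalgamated free product G^a *_F G^b (over injective homomorphisms F → G^a, F → G^b of index two), where the triple (F, G^a, G^b) is one of: (1, ℤ₂, ℤ₂); (ℤ₂, ℤ₄, ℤ₄); (ℤ₂, D₂, ℤ₄); (ℤ₂, D₂, D₂); (ℤ₃, ℤ₆, ℤ₆); (ℤ₃, D₃, ℤ₆); (ℤ₃, D₃, D₃); (ℤ₄, ℤ₄×ℤ₂, ℤ₄×ℤ₂); (ℤ₄, D₄, ℤ₄×ℤ₂); (ℤ₄, D₄, D₄); (ℤ₆, ℤ₆×ℤ₂, ℤ₆×ℤ₂); (ℤ₆,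 D₆, ℤ₆×ℤ₂); (ℤ₆, D₆, D₆); (D₂, D₂×ℤ₂, D₂×ℤ₂); (D₂, D₄, D₂×ℤ₂); (D₂, D₄, D₄); (D₃, D₃×ℤ₂, D₃×ℤ₂); (D₄, D₄×ℤ₂, D₄×ℤ₂); (D₆, D₆×ℤ₂, D₆×ℤ₂). -/
noncomputable section

/-- The cyclic group of order `i`. -/
abbrev Zc (i : ℕ) := Multiplicative (ZMod i)

/-- A two-member family of groups, indexed by `Bool`. -/
def famG (Ga Gb : Type) : Bool → Type := fun i => bif i then Ga else Gb

instance famGGroup (Ga Gb : Type) [Group Ga] [Group Gb] : (i : Bool) → Group (famG Ga Gb i)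
  | true => inferInstanceAs (Group Ga)
  | false => inferInstanceAs (Group Gb)

/-- A two-member family of homomorphisms out of `F`, indexed by `Bool`. -/
def famφ {F Ga Gb : Type} [Group F] [Group Ga] [Group Gb]
    (φa : F →* Ga) (φb : F →* Gb) : (i : Bool) → (F →* famG Ga Gb i)
  | true => φa
  | false => φb

/-- `G` is isomorphic to the amalgamated free product `Ga *_F Gb` over injective
homomorphisms `F → Ga` and `F → Gb` of index two. -/
def IsAmalgam (G : Type*) [Group G] (F Ga Gb : Type) [Group F] [Group Ga] [Group Gb] : Prop :=
  ∃ (φa : F →* Ga) (φb : F →* Gb),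
    Function.Injective φa ∧ Function.Injective φb ∧
    φa.range.index = 2 ∧ φb.range.index = 2 ∧
    Nonempty (G ≃* Monoid.PushoutI (famφ φa φb))

/-!
The action of `G` on `l` gives a surjection `π` from `G` to the infinite dihedral group, whose
kernel `N` is the pointwise fixer of `l` and hence finite; the action on the directions orthogonal
to `l` gives `ρ : G →* O(2)`, and `ker π ∩ ker ρ = 1`. The infinite dihedral group is the free
product of the stabilisers of two adjacent reflection points, so `G` is the amalgam over `N` of
their preimages `A` and `B`, in which `N` has index two.

Since `ρ` is injective on `N`, this group is cyclic or dihedral. If `ρ` is injective on `A`, then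
`A` is cyclic or dihedral of twice the order of `N`; otherwise `ker ρ ∩ A` is a central complement
of `N` in `A` and `A ≃ N × ℤ₂`. Either way `N` leaves at most two isomorphism types for `A`, and
likewise for `B`.

The rotations in question have order 1, 2, 3, 4 or 6 because linear parts of elements of `Γ` have
integral trace: they preserve the lattice of translations of `Γ`, which spans by Bieberbach's
theorem. The heart of the latter is that an element of `Γ` with linear part near the identity is a
translation, which follows from a commutator argument.
-/

open DihedralGroup Subgroup

section Dihedral

variable {n : ℕ} {H : Type*} [Group H]

/-- The homomorphism out of a dihedral group that sends the rotation `r 1` to `x` and the reflection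
`sr 0` to `s`, defined whenever `x` and `s` satisfy the dihedral relations. For `n = 0` the source
is the infinite dihedral group and the first relation is void. -/
def dihedralLift (x s : H) (hx : x ^ n = 1) (hs : s * s = 1) (hxs : s * x * s = x⁻¹) :
    DihedralGroup n →* H :=
  let p : ZMod n →+ Additive H :=
    ZMod.lift n ⟨(zmultiplesHom (Additive H)) (.ofMul x), by
      rw [zmultiplesHom_apply, natCast_zsmul]; exact hx⟩
  MonoidHom.mk' (fun | r i => (p i).toMul | sr i => s * (p i).toMul) <| by
    have hp : ∀ k : ℤ, (p k).toMul = x ^ k := fun k => by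
      simp only [p, ZMod.lift_coe, zmultiplesHom_apply, toMul_zsmul, toMul_ofMul]
    have hsp : ∀ k : ℤ, x ^ k * s = s * x ^ (-k) := fun k => by
      have := (SemiconjBy.zpow_right (show SemiconjBy s x x⁻¹ from by
        rw [SemiconjBy, ← hxs, mul_assoc, hs, mul_one]) (-k)).eq
      rw [this, inv_zpow, zpow_neg, inv_inv]
    rintro (i | i) (j | j) <;> obtain ⟨i, rfl⟩ := ZMod.intCast_surjective i <;>
      obtain ⟨j, rfl⟩ := ZMod.intCast_surjective j <;>
      simp only [r_mul_r, r_mul_sr, sr_mul_r, sr_mul_sr, ← Int.cast_add, ← Int.cast_sub, hp]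
    · exact zpow_add ..
    · rw [← mul_assoc, hsp, mul_assoc, ← zpow_add, neg_add_eq_sub]
    · rw [mul_assoc, ← zpow_add]
    · rw [mul_assoc, ← mul_assoc _ s, hsp, mul_assoc, ← mul_assoc, hs, one_mul, ← zpow_add,
        neg_add_eq_sub]

variable {x s : H} (hx : x ^ n = 1) (hs : s * s = 1) (hxs : s * x * s = x⁻¹)

@[simp]
theorem dihedralLift_r_intCast (k : ℤ) : dihedralLift x s hx hs hxs (r k) = x ^ k := by
  simp [dihedralLift]

@[simp]
theorem dihedralLift_sr_intCast (k : ℤ) : dihedralLift x s hx hs hxs (sr k) = s * x ^ k := by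
  simp [dihedralLift]

theorem mem_range_dihedralLift {g : H} :
    g ∈ (dihedralLift x s hx hs hxs).range ↔ g ∈ zpowers x ∨ s * g ∈ zpowers x := by
  constructor
  · rintro ⟨i | i, rfl⟩ <;> obtain ⟨k, rfl⟩ := ZMod.intCast_surjective i
    · exact .inl ⟨k, by simp⟩
    · exact .inr ⟨k, by simp [← mul_assoc, hs]⟩
  · rintro (⟨k, hk⟩ | ⟨k, hk⟩)
    · exact ⟨r k, by simpa using hk⟩
    · refine ⟨sr k, ?_⟩
      rw [dihedralLift_sr_intCast, show x ^ k = s * g from hk, ← mul_assoc, hs, one_mul]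

theorem dihedralLift_injective (hn : orderOf x = n) (hsx : s ∉ zpowers x) :
    Function.Injective (dihedralLift x s hx hs hxs) := by
  rw [injective_iff_map_eq_one]
  rintro (i | i) hi <;> obtain ⟨k, rfl⟩ := ZMod.intCast_surjective i
  · rw [dihedralLift_r_intCast, ← orderOf_dvd_iff_zpow_eq_one, hn] at hi
    rw [(ZMod.intCast_zmod_eq_zero_iff_dvd k n).2 hi, r_zero]
  · rw [dihedralLift_sr_intCast, mul_eq_one_iff_eq_inv, ← zpow_neg] at hi
    exact absurd ⟨-k, hi.symm⟩ hsx

theorem zpowers_sr_zero_sup_zpowers_sr_one :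
    zpowers (sr 0 : DihedralGroup n) ⊔ zpowers (sr 1) = ⊤ := by
  set S := zpowers (sr 0 : DihedralGroup n) ⊔ zpowers (sr 1)
  have h0 : sr 0 ∈ S := mem_sup_left (mem_zpowers _)
  have h1 : sr 1 ∈ S := mem_sup_right (mem_zpowers _)
  have hr : ∀ i, r i ∈ S := fun i => by
    obtain ⟨k, rfl⟩ := ZMod.intCast_surjective i
    rw [← r_one_zpow, ← sub_zero (1 : ZMod n), ← sr_mul_sr]
    exact zpow_mem (mul_mem h0 h1) k
  refine eq_top_iff.2 fun g _ => ?_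
  rcases g with i | i
  · exact hr i
  · rw [← zero_add i, ← sr_mul_r]
    exact mul_mem h0 (hr i)

theorem nonempty_mulEquiv_dihedralGroup {x s : H} (hs : s ∉ zpowers x)
    (hinv : ∀ t ∉ zpowers x, t * t = 1)
    (hmul : ∀ t ∉ zpowers x, ∀ u ∉ zpowers x, t * u ∈ zpowers x) :
    Nonempty (H ≃* DihedralGroup (orderOf x)) := by
  have hsx : s * x ∉ zpowers x := fun h => hs ((mul_mem_cancel_right (mem_zpowers x)).1 h)
  have hxs : s * x * s = x⁻¹ := eq_inv_of_mul_eq_one_left (by rw [mul_assoc, hinv _ hsx])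
  let f : DihedralGroup (orderOf x) →* H :=
    dihedralLift x s (pow_orderOf_eq_one x) (hinv s hs) hxs
  have hsurj : f.range = ⊤ := eq_top_iff.2 fun g _ =>
    (mem_range_dihedralLift ..).2 <| or_iff_not_imp_left.2 fun hg => hmul s hs g hg
  exact ⟨(MulEquiv.ofBijective f
    ⟨dihedralLift_injective _ _ _ rfl hs, MonoidHom.range_eq_top.1 hsurj⟩).symm⟩

end Dihedral

section Amalgam

variable {F A B : Type} [Group F] [Group A] [Group B]

/-- The amalgamated free product `A *_F B` of `IsAmalgam`. -/
abbrev Amalgam (φa : F →* A) (φb : F →* B) := Monoid.PushoutI (famφ φa φb)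

namespace Amalgam

variable {φa : F →* A} {φb : F →* B} {H : Type*} [Group H]

/-- The canonical map from the left factor. -/
def inl : A →* Amalgam φa φb := Monoid.PushoutI.of (φ := famφ φa φb) true

/-- The canonical map from the right factor. -/
def inr : B →* Amalgam φa φb := Monoid.PushoutI.of (φ := famφ φa φb) false

theorem inl_comp_eq_inr_comp :
    (inl : A →* Amalgam φa φb).comp φa = (inr : B →* Amalgam φa φb).comp φb :=
  (Monoid.PushoutI.of_comp_eq_base (φ := famφ φa φb) true).trans
    (Monoid.PushoutI.of_comp_eq_base (φ := famφ φa φb) false).symm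

/-- The homomorphism out of `A *_F B` given by compatible homomorphisms out of `A` and `B`. -/
def lift (f : A →* H) (g : B →* H) (h : f.comp φa = g.comp φb) : Amalgam φa φb →* H :=
  Monoid.PushoutI.lift (fun | true => f | false => g) (f.comp φa)
    fun | true => rfl | false => h.symm

@[simp]
theorem lift_comp_inl (f : A →* H) (g : B →* H) (h : f.comp φa = g.comp φb) :
    (lift f g h).comp inl = f :=
  MonoidHom.ext fun x => Monoid.PushoutI.lift_of (φ := famφ φa φb) (i := true)
    (fun | true => f | false => g) (f.comp φa) (fun | true => rfl | false => h.symm) x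

@[simp]
theorem lift_comp_inr (f : A →* H) (g : B →* H) (h : f.comp φa = g.comp φb) :
    (lift f g h).comp inr = g :=
  MonoidHom.ext fun x => Monoid.PushoutI.lift_of (φ := famφ φa φb) (i := false)
    (fun | true => f | false => g) (f.comp φa) (fun | true => rfl | false => h.symm) x

theorem hom_ext {f g : Amalgam φa φb →* H} (ha : f.comp inl = g.comp inl)
    (hb : f.comp inr = g.comp inr) : f = g :=
  Monoid.PushoutI.hom_ext_nonempty fun | true => ha | false => hb

theorem range_inl_sup_range_inr :
    (inl : A →* Amalgam φa φb).range ⊔ (inr : B →* Amalgam φa φb).range = ⊤ := by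
  refine eq_top_iff.2 fun x _ => ?_
  induction x using Monoid.PushoutI.induction_on with
  | of i g =>
    cases i
    · exact mem_sup_right ⟨g, rfl⟩
    · exact mem_sup_left ⟨g, rfl⟩
  | base f =>
    rw [← Monoid.PushoutI.of_apply_eq_base (famφ φa φb) true]
    exact mem_sup_left ⟨φa f, rfl⟩
  | mul x y hx hy => exact mul_mem (hx trivial) (hy trivial)

theorem normal_map_inl_range (ha : φa.range.Normal) (hb : φb.range.Normal) :
    (φa.range.map (inl : A →* Amalgam φa φb)).Normal := by
  rw [← normalizer_eq_top_iff, eq_top_iff, ← range_inl_sup_range_inr, sup_le_iff]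
  constructor
  · rw [MonoidHom.range_eq_map inl, ← normalizer_eq_top_iff.2 ha]
    exact le_normalizer_map _
  · rw [← MonoidHom.range_comp, inl_comp_eq_inr_comp, MonoidHom.range_comp,
      MonoidHom.range_eq_map inr, ← normalizer_eq_top_iff.2 hb]
    exact le_normalizer_map _

end Amalgam

theorem IsAmalgam.symm {G : Type*} [Group G] (h : IsAmalgam G F A B) : IsAmalgam G F B A := by
  obtain ⟨φa, φb, ha, hb, hia, hib, ⟨e⟩⟩ := h
  let swap {A B : Type} [Group A] [Group B] (φa : F →* A) (φb : F →* B) :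
      Amalgam φa φb →* Amalgam φb φa :=
    Amalgam.lift Amalgam.inr Amalgam.inl Amalgam.inl_comp_eq_inr_comp.symm
  have swap_swap {A B : Type} [Group A] [Group B] (φa : F →* A) (φb : F →* B) :
      (swap φb φa).comp (swap φa φb) = .id _ :=
    Amalgam.hom_ext (by simp [swap, MonoidHom.comp_assoc]) (by simp [swap, MonoidHom.comp_assoc])
  exact ⟨φb, φa, hb, ha, hib, hia,
    ⟨e.trans ((swap φa φb).toMulEquiv (swap φb φa) (swap_swap φa φb) (swap_swap φb φa))⟩⟩

theorem comp_eq_of_range_le_zpowers {D H : Type*} [Group D] [Group H] {χ : A →* D} {f : A →* H}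
    {ψ : D →* H} (hker : χ.ker ≤ f.ker) {a : A} (hχ : χ.range ≤ zpowers (χ a))
    (ha : ψ (χ a) = f a) : ψ.comp χ = f := by
  ext x
  obtain ⟨k, hk⟩ := hχ ⟨x, rfl⟩
  have hx : a ^ (-k) * x ∈ f.ker := hker <| by
    rw [MonoidHom.mem_ker, map_mul, map_zpow, ← hk, ← zpow_add, neg_add_cancel, zpow_zero]
  rw [MonoidHom.mem_ker, map_mul, map_zpow, zpow_neg, inv_mul_eq_one] at hx
  rw [MonoidHom.comp_apply, ← hk, ← hx]
  simp [ha]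

end Amalgam

section DihedralQuotient

variable {F A B : Type} [Group F] [Group A] [Group B] {G : Type*} [Group G]
  {iF : F →* G} {iA : A →* G} {iB : B →* G} {φa : F →* A} {φb : F →* B} {π : G →* DihedralGroup 0}

theorem range_subtype_comp_mulEquiv {S : Subgroup G} (e : A ≃* S) :
    (S.subtype.comp (e : A →* S)).range = S := by
  rw [MonoidHom.range_comp, MulEquiv.range_eq_top, ← MonoidHom.range_eq_map, range_subtype]

theorem exists_comp_eq_of_range_le (hA : Function.Injective iA) (h : iF.range ≤ iA.range) :
    ∃ φ : F →* A, iA.comp φ = iF :=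
  ⟨(iA.ofInjective hA).symm.toMonoidHom.comp ((inclusion h).comp iF.rangeRestrict), by
    ext x
    exact congrArg Subtype.val ((iA.ofInjective hA).apply_symm_apply (inclusion h ⟨iF x, x, rfl⟩))⟩

theorem range_eq_ker_of_comp_eq (hA : Function.Injective iA) (hφa : iA.comp φa = iF)
    (hFr : iF.range = π.ker) : φa.range = (π.comp iA).ker := by
  rw [← MonoidHom.comap_ker, ← hFr, ← hφa, MonoidHom.range_comp, comap_map_eq_self_of_injective hA]

theorem relIndex_ker_comap_zpowers_sr (hπ : Function.Surjective π) (k : ZMod 0) :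
    π.ker.relIndex ((zpowers (sr k)).comap π) = 2 := by
  rw [← MonoidHom.comap_bot, relIndex_comap, map_comap_eq_self_of_surjective hπ,
    relIndex_bot_left, Nat.card_zpowers, orderOf_sr]

theorem index_ker_comp_of_range_eq (hπ : Function.Surjective π) {k : ZMod 0}
    (hAr : iA.range = (zpowers (sr k)).comap π) : (π.comp iA).ker.index = 2 := by
  rw [← MonoidHom.comap_ker, index_comap, hAr, relIndex_ker_comap_zpowers_sr hπ]

theorem Amalgam.lift_surjective (hπ : Function.Surjective π) (hφ : iA.comp φa = iB.comp φb)
    (hker : π.ker ≤ iA.range) (hAr : iA.range = (zpowers (sr 0)).comap π)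
    (hBr : iB.range = (zpowers (sr 1)).comap π) :
    Function.Surjective (Amalgam.lift iA iB hφ) := by
  set Φ := Amalgam.lift iA iB hφ
  have hA : iA.range ≤ Φ.range := by
    rw [← Amalgam.lift_comp_inl iA iB hφ, MonoidHom.range_comp]
    exact map_le_range _ _
  have hB : iB.range ≤ Φ.range := by
    rw [← Amalgam.lift_comp_inr iA iB hφ, MonoidHom.range_comp]
    exact map_le_range _ _
  rw [← MonoidHom.range_eq_top, ← comap_map_eq_self (hker.trans hA)]
  suffices Φ.range.map π = ⊤ by rw [this, comap_top]
  rw [eq_top_iff, ← zpowers_sr_zero_sup_zpowers_sr_one, sup_le_iff,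
    ← map_comap_eq_self_of_surjective hπ (zpowers (sr 0)),
    ← map_comap_eq_self_of_surjective hπ (zpowers (sr 1)), ← hAr, ← hBr]
  exact ⟨map_mono hA, map_mono hB⟩

theorem exists_dihedral_hom {H : Type*} [Group H] {f : A →* H} {g : B →* H}
    {χ : A →* DihedralGroup 0} {χ' : B →* DihedralGroup 0} (hf : χ.ker ≤ f.ker)
    (hg : χ'.ker ≤ g.ker) (hχ : χ.range = zpowers (sr 0)) (hχ' : χ'.range = zpowers (sr 1)) :
    ∃ ψ : DihedralGroup 0 →* H, ψ.comp χ = f ∧ ψ.comp χ' = g := by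
  obtain ⟨a, ha⟩ := hχ.ge (mem_zpowers _)
  obtain ⟨b, hb⟩ := hχ'.ge (mem_zpowers _)
  have hfa : f a * f a = 1 := by
    rw [← map_mul]
    exact hf (by rw [MonoidHom.mem_ker, map_mul, ha, sr_mul_self])
  have hgb : g b * g b = 1 := by
    rw [← map_mul]
    exact hg (by rw [MonoidHom.mem_ker, map_mul, hb, sr_mul_self])
  let ψ : DihedralGroup 0 →* H := dihedralLift (f a * g b) (f a) (pow_zero _) hfa <| by
    rw [← mul_assoc, hfa, one_mul, mul_inv_rev, inv_eq_of_mul_eq_one_left hfa,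
      inv_eq_of_mul_eq_one_left hgb]
  refine ⟨ψ, comp_eq_of_range_le_zpowers hf (ha ▸ hχ.le) ?_,
    comp_eq_of_range_le_zpowers hg (hb ▸ hχ'.le) ?_⟩
  · rw [ha]
    simpa using dihedralLift_sr_intCast (n := 0) (pow_zero (f a * g b)) hfa _ 0
  · rw [hb]
    simpa [← mul_assoc, hfa] using dihedralLift_sr_intCast (n := 0) (pow_zero (f a * g b)) hfa _ 1

theorem Amalgam.lift_injective (hφ : iA.comp φa = iB.comp φb)
    (hinj : Function.Injective (iA.comp φa)) (hA : φa.range = (π.comp iA).ker)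
    (hB : φb.range = (π.comp iB).ker) (hAr : (π.comp iA).range = zpowers (sr 0))
    (hBr : (π.comp iB).range = zpowers (sr 1)) : Function.Injective (Amalgam.lift iA iB hφ) := by
  set C := φa.range.map (Amalgam.inl : A →* Amalgam φa φb) with hC
  have : C.Normal := Amalgam.normal_map_inl_range (hA ▸ inferInstance) (hB ▸ inferInstance)
  have hC' : C = φb.range.map Amalgam.inr := by
    rw [hC, ← MonoidHom.range_comp, Amalgam.inl_comp_eq_inr_comp, MonoidHom.range_comp]
  obtain ⟨ψ, hψa, hψb⟩ := exists_dihedral_hom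
    (f := (QuotientGroup.mk' C).comp Amalgam.inl) (g := (QuotientGroup.mk' C).comp Amalgam.inr)
    (by rw [← hA, ← MonoidHom.comap_ker, QuotientGroup.ker_mk', ← map_le_iff_le_comap])
    (by rw [← hB, ← MonoidHom.comap_ker, QuotientGroup.ker_mk', ← map_le_iff_le_comap, hC'])
    hAr hBr
  have hψ : (ψ.comp π).comp (Amalgam.lift iA iB hφ) = QuotientGroup.mk' C :=
    Amalgam.hom_ext (by rwa [MonoidHom.comp_assoc, Amalgam.lift_comp_inl])
      (by rwa [MonoidHom.comp_assoc, Amalgam.lift_comp_inr])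
  rw [injective_iff_map_eq_one]
  intro w hw
  have hwC : w ∈ C := by
    rw [← QuotientGroup.ker_mk' C, ← hψ, MonoidHom.mem_ker, MonoidHom.comp_apply, hw, map_one]
  obtain ⟨_, ⟨f, rfl⟩, rfl⟩ := hwC
  have hf : iA.comp φa f = 1 := by
    rw [← hw, ← MonoidHom.comp_apply _ Amalgam.inl, Amalgam.lift_comp_inl]
    rfl
  rw [(injective_iff_map_eq_one _).1 hinj f hf, map_one, map_one]

theorem isAmalgam_of_dihedral_quotient (hπ : Function.Surjective π) (eF : F ≃* π.ker)
    (eA : A ≃* (zpowers (sr 0)).comap π) (eB : B ≃* (zpowers (sr 1)).comap π) :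
    IsAmalgam G F A B := by
  set iF := π.ker.subtype.comp (eF : F →* _)
  set iA := (Subgroup.subtype _).comp (eA : A →* (zpowers (sr 0)).comap π)
  set iB := (Subgroup.subtype _).comp (eB : B →* (zpowers (sr 1)).comap π)
  have hF : Function.Injective iF := π.ker.subtype_injective.comp eF.injective
  have hA : Function.Injective iA := (Subgroup.subtype_injective _).comp eA.injective
  have hB : Function.Injective iB := (Subgroup.subtype_injective _).comp eB.injective
  have hFr : iF.range = π.ker := range_subtype_comp_mulEquiv eF
  have hAr : iA.range = (zpowers (sr 0)).comap π := range_subtype_comp_mulEquiv eA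
  have hBr : iB.range = (zpowers (sr 1)).comap π := range_subtype_comp_mulEquiv eB
  have hker (k : ZMod 0) : π.ker ≤ (zpowers (sr k)).comap π := ker_le_comap _ _
  obtain ⟨φa, hφa⟩ := exists_comp_eq_of_range_le (iF := iF) hA (by rw [hFr, hAr]; exact hker 0)
  obtain ⟨φb, hφb⟩ := exists_comp_eq_of_range_le (iF := iF) hB (by rw [hFr, hBr]; exact hker 1)
  have hφ : iA.comp φa = iB.comp φb := hφa.trans hφb.symm
  have hkerA := range_eq_ker_of_comp_eq hA hφa hFr
  have hkerB := range_eq_ker_of_comp_eq hB hφb hFr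
  have hinj : Function.Injective (iA ∘ φa) := by rwa [← MonoidHom.coe_comp, hφa]
  have hinj' : Function.Injective (iB ∘ φb) := by rwa [← MonoidHom.coe_comp, hφb]
  refine ⟨φa, φb, hinj.of_comp, hinj'.of_comp, hkerA ▸ index_ker_comp_of_range_eq hπ hAr,
    hkerB ▸ index_ker_comp_of_range_eq hπ hBr,
    ⟨(MulEquiv.ofBijective (Amalgam.lift iA iB hφ) ⟨?_, ?_⟩).symm⟩⟩
  · refine Amalgam.lift_injective hφ hinj hkerA hkerB ?_ ?_
    · rw [MonoidHom.range_comp, hAr, map_comap_eq_self_of_surjective hπ]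
    · rw [MonoidHom.range_comp, hBr, map_comap_eq_self_of_surjective hπ]
  · exact Amalgam.lift_surjective hπ hφ (hAr ▸ hker 0) hAr hBr

end DihedralQuotient

section PlanarPointGroups

/-- The orders of rotations permitted by the crystallographic restriction. -/
def crystallographicOrders : Finset ℕ := {1, 2, 3, 4, 6}

/-- A group isomorphic to a crystallographic point group of the plane: cyclic, or dihedral with
rotation subgroup, of an order permitted by the crystallographic restriction. -/
def IsPlanarPointGroup (K : Type*) [Group K] : Prop :=
  ∃ n ∈ crystallographicOrders, Nonempty (K ≃* Zc n) ∨ Nonempty (K ≃* DihedralGroup n)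

/-- The shape of a group `A` of symmetries of `ℝ × ℝ²` that preserves the two factors and in which
the symmetries fixing the first factor form a subgroup `N` of index two. -/
def IsPlanarExtension (N A : Type*) [Group N] [Group A] : Prop :=
  Nonempty (A ≃* N × Zc 2) ∨ IsPlanarPointGroup A ∧ Nat.card A = 2 * Nat.card N

variable {A O : Type*} [Group A] [Group O]

theorem nonempty_mulEquiv_prod {N Z : Subgroup A} [N.Normal] [Z.Normal] (hd : Disjoint N Z)
    (hs : N ⊔ Z = ⊤) : Nonempty (A ≃* N × Z) := by
  have hcomm (m : N) (n : Z) : Commute (N.subtype m) (Z.subtype n) :=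
    commute_of_normal_of_disjoint N Z ‹_› ‹_› hd m n m.2 n.2
  refine ⟨(MulEquiv.ofBijective (N.subtype.noncommCoprod Z.subtype hcomm) ⟨?_, ?_⟩).symm⟩
  · rw [MonoidHom.noncommCoprod_injective]
    exact ⟨N.subtype_injective, Z.subtype_injective, by simpa using hd⟩
  · rw [← MonoidHom.range_eq_top, MonoidHom.noncommCoprod_range]
    simpa using hs

theorem nonempty_mulEquiv_prod_or_injective {N : Subgroup A} (hN : N.index = 2) {ρ : A →* O}
    (h : Disjoint N ρ.ker) : Nonempty (A ≃* N × Zc 2) ∨ Function.Injective ρ := by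
  refine or_iff_not_imp_right.2 fun hρ => ?_
  have := normal_of_index_eq_two hN
  have hdvd : Nat.card ρ.ker ∣ 2 := by
    rw [← relIndex_bot_left, ← h.eq_bot, inf_relIndex_right, ← hN]
    exact relIndex_dvd_index_of_normal _ _
  have hcard : Nat.card ρ.ker = 2 := ((Nat.dvd_prime Nat.prime_two).1 hdvd).resolve_left fun h1 =>
    hρ ((MonoidHom.ker_eq_bot_iff ρ).1 (card_eq_one.1 h1))
  have hsup : N ⊔ ρ.ker = ⊤ := by
    have h2 : N.relIndex (N ⊔ ρ.ker) = 2 := by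
      rw [relIndex_sup_left, ← inf_relIndex_right, h.eq_bot, relIndex_bot_left, hcard]
    have h3 := relIndex_mul_index (le_sup_left : N ≤ N ⊔ ρ.ker)
    rw [h2, hN] at h3
    exact index_eq_one.1 (by lia)
  obtain ⟨e⟩ := nonempty_mulEquiv_prod h hsup
  exact ⟨e.trans (.prodCongr (.refl N) (mulEquivOfPrimeCardEq (p := 2) hcard (by simp)))⟩

theorem natCard_Zc (n : ℕ) : Nat.card (Zc n) = n :=
  Nat.card_zmod n

theorem nonempty_dihedralGroup_mulEquiv_prod {n : ℕ} (hn : Odd n) :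
    Nonempty (DihedralGroup (2 * n) ≃* DihedralGroup n × Zc 2) := by
  have : NeZero n := ⟨hn.pos.ne'⟩
  let x : DihedralGroup n × Zc 2 := (r 1, .ofAdd 1)
  have hx : orderOf x = 2 * n := by
    rw [Prod.orderOf, orderOf_r_one, orderOf_ofAdd_eq_addOrderOf, ZMod.addOrderOf_one,
      (Nat.coprime_two_right.2 hn).lcm_eq_mul, mul_comm]
  let f : DihedralGroup (2 * n) →* DihedralGroup n × Zc 2 :=
    dihedralLift x (sr 0, 1) (hx ▸ pow_orderOf_eq_one x) (by simp)
      (by ext <;> simp [x])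
  have hf : Function.Injective f := dihedralLift_injective _ _ _ hx <| by
    rintro ⟨k, hk⟩
    simpa [x] using congrArg Prod.fst hk
  exact ⟨.ofBijective f ((Nat.bijective_iff_injective_and_card f).2 ⟨hf, by
    rw [Nat.card_prod, nat_card, nat_card, natCard_Zc]; ring⟩)⟩

theorem nonempty_Zc_mul_mulEquiv {m n : ℕ} (h : m.Coprime n) :
    Nonempty (Zc (m * n) ≃* Zc m × Zc n) :=
  ⟨((ZMod.chineseRemainder h).toAddEquiv.toMultiplicative).trans (MulEquiv.prodMultiplicative ..)⟩

namespace IsPlanarExtension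

variable {N A : Type*} [Group N] [Group A]

theorem natCard_eq (h : IsPlanarExtension N A) : Nat.card A = 2 * Nat.card N := by
  rcases h with ⟨⟨e⟩⟩ | ⟨-, h⟩
  · rw [Nat.card_congr e.toEquiv, Nat.card_prod, natCard_Zc, mul_comm]
  · exact h

theorem of_mulEquiv_Zc {n : ℕ} (h : IsPlanarExtension N A) (e : N ≃* Zc n) :
    Nonempty (A ≃* Zc n × Zc 2) ∨ Nonempty (A ≃* DihedralGroup n) ∨
      2 * n ∈ crystallographicOrders ∧ Nonempty (A ≃* Zc (2 * n)) := by
  have hcard : Nat.card A = 2 * n := by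
    rw [h.natCard_eq, Nat.card_congr e.toEquiv, natCard_Zc]
  rcases h with ⟨⟨f⟩⟩ | ⟨⟨m, hm, ⟨⟨f⟩⟩ | ⟨⟨f⟩⟩⟩, -⟩
  · exact .inl ⟨f.trans (.prodCongr e (.refl _))⟩
  · have : m = 2 * n := by rwa [Nat.card_congr f.toEquiv, natCard_Zc] at hcard
    exact .inr (.inr ⟨this ▸ hm, ⟨this ▸ f⟩⟩)
  · have : m = n := by simpa [Nat.card_congr f.toEquiv, nat_card] using hcard
    exact .inr (.inl ⟨this ▸ f⟩)

theorem of_mulEquiv_dihedralGroup {n : ℕ} (h : IsPlanarExtension N A) (e : N ≃* DihedralGroup n) :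
    Nonempty (A ≃* DihedralGroup n × Zc 2) ∨
      (2 * n ∈ crystallographicOrders ∧ Nonempty (A ≃* DihedralGroup (2 * n))) ∨
      4 * n ∈ crystallographicOrders := by
  have hcard : Nat.card A = 4 * n := by
    rw [h.natCard_eq, Nat.card_congr e.toEquiv, nat_card]; ring
  rcases h with ⟨⟨f⟩⟩ | ⟨⟨m, hm, ⟨⟨f⟩⟩ | ⟨⟨f⟩⟩⟩, -⟩
  · exact .inl ⟨f.trans (.prodCongr e (.refl _))⟩
  · have : m = 4 * n := by rwa [Nat.card_congr f.toEquiv, natCard_Zc] at hcard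
    exact .inr (.inr (this ▸ hm))
  · have : m = 2 * n := by
      rw [Nat.card_congr f.toEquiv, nat_card] at hcard
      lia
    exact .inr (.inl ⟨this ▸ hm, ⟨this ▸ f⟩⟩)

end IsPlanarExtension

/-- `N` is isomorphic to `F`, and a planar extension of `N` can only be isomorphic to `X` or `Y`. -/
def HasPlanarExtensions (N F X Y : Type) [Group N] [Group F] [Group X] [Group Y] : Prop :=
  Nonempty (N ≃* F) ∧ ∀ (A : Type) [Group A], IsPlanarExtension N A →
    Nonempty (A ≃* X) ∨ Nonempty (A ≃* Y)

namespace HasPlanarExtensions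

variable {N : Type} [Group N]

theorem of_natCard_eq_one (h : Nat.card N = 1) : HasPlanarExtensions N PUnit (Zc 2) (Zc 2) := by
  have : Subsingleton N := (Nat.card_eq_one_iff_unique.1 h).1
  have := uniqueOfSubsingleton (1 : N)
  refine ⟨⟨.ofUnique⟩, fun A _ hA => .inl ⟨mulEquivOfPrimeCardEq (p := 2) ?_ (natCard_Zc 2)⟩⟩
  rw [hA.natCard_eq, h]

theorem of_mulEquiv_Zc {n : ℕ} (hn : 2 * n ∉ crystallographicOrders) (e : N ≃* Zc n) :
    HasPlanarExtensions N (Zc n) (DihedralGroup n) (Zc n × Zc 2) :=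
  ⟨⟨e⟩, fun A _ hA => by have := hA.of_mulEquiv_Zc e; tauto⟩

theorem of_mulEquiv_Zc_two (e : N ≃* Zc 2) :
    HasPlanarExtensions N (Zc 2) (DihedralGroup 2) (Zc 4) := by
  refine ⟨⟨e⟩, fun A _ hA => ?_⟩
  rcases hA.of_mulEquiv_Zc e with ⟨⟨f⟩⟩ | h | ⟨-, h⟩
  · have : IsKleinFour (Zc 2 × Zc 2) := ⟨by rw [Nat.card_prod, natCard_Zc], by
      rw [Monoid.exponent_prod]; simp⟩
    exact .inl ⟨f.trans IsKleinFour.nonempty_mulEquiv.some⟩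
  · exact .inl h
  · exact .inr h

theorem of_mulEquiv_Zc_three (e : N ≃* Zc 3) :
    HasPlanarExtensions N (Zc 3) (DihedralGroup 3) (Zc 6) := by
  refine ⟨⟨e⟩, fun A _ hA => ?_⟩
  rcases hA.of_mulEquiv_Zc e with ⟨⟨f⟩⟩ | h | ⟨-, h⟩
  · obtain ⟨g⟩ := nonempty_Zc_mul_mulEquiv (show Nat.Coprime 3 2 by decide)
    exact .inr ⟨f.trans g.symm⟩
  · exact .inl h
  · exact .inr h

theorem of_mulEquiv_dihedralGroup {n : ℕ} (hn : 4 * n ∉ crystallographicOrders)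
    (e : N ≃* DihedralGroup n) :
    HasPlanarExtensions N (DihedralGroup n) (DihedralGroup (2 * n)) (DihedralGroup n × Zc 2) :=
  ⟨⟨e⟩, fun A _ hA => by have := hA.of_mulEquiv_dihedralGroup e; tauto⟩

theorem of_mulEquiv_dihedralGroup_of_notMem_or_odd {n : ℕ} (hn : 4 * n ∉ crystallographicOrders)
    (hn' : 2 * n ∉ crystallographicOrders ∨ Odd n) (e : N ≃* DihedralGroup n) :
    HasPlanarExtensions N (DihedralGroup n) (DihedralGroup n × Zc 2) (DihedralGroup n × Zc 2) := by
  refine ⟨⟨e⟩, fun A _ hA => .inl ?_⟩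
  rcases hA.of_mulEquiv_dihedralGroup e with h | ⟨h, ⟨f⟩⟩ | h
  · exact h
  · obtain ⟨g⟩ := nonempty_dihedralGroup_mulEquiv_prod (hn'.resolve_left (not_not.2 h))
    exact ⟨f.trans g⟩
  · exact absurd h hn

theorem isAmalgam {G F X Y : Type} [Group G] [Group F] [Group X] [Group Y]
    {π : G →* DihedralGroup 0} (h : HasPlanarExtensions π.ker F X Y) (hπ : Function.Surjective π)
    (hext : ∀ k, IsPlanarExtension π.ker ((zpowers (sr k)).comap π)) :
    IsAmalgam G F Y Y ∨ IsAmalgam G F X Y ∨ IsAmalgam G F X X := by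
  obtain ⟨⟨eF⟩, h⟩ := h
  rcases h _ (hext 0) with ⟨⟨eA⟩⟩ | ⟨⟨eA⟩⟩ <;> rcases h _ (hext 1) with ⟨⟨eB⟩⟩ | ⟨⟨eB⟩⟩ <;>
    have := isAmalgam_of_dihedral_quotient hπ eF.symm eA.symm eB.symm
  · exact .inr (.inr this)
  · exact .inr (.inl this)
  · exact .inr (.inl this.symm)
  · exact .inl this

end HasPlanarExtensions

open HasPlanarExtensions in
theorem IsPlanarPointGroup.hasPlanarExtensions {N : Type} [Group N] (h : IsPlanarPointGroup N) :
    HasPlanarExtensions N PUnit (Zc 2) (Zc 2) ∨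
    HasPlanarExtensions N (Zc 2) (DihedralGroup 2) (Zc 4) ∨
    HasPlanarExtensions N (Zc 3) (DihedralGroup 3) (Zc 6) ∨
    HasPlanarExtensions N (Zc 4) (DihedralGroup 4) (Zc 4 × Zc 2) ∨
    HasPlanarExtensions N (Zc 6) (DihedralGroup 6) (Zc 6 × Zc 2) ∨
    HasPlanarExtensions N (DihedralGroup 2) (DihedralGroup 4) (DihedralGroup 2 × Zc 2) ∨
    HasPlanarExtensions N (DihedralGroup 3) (DihedralGroup 3 × Zc 2) (DihedralGroup 3 × Zc 2) ∨
    HasPlanarExtensions N (DihedralGroup 4) (DihedralGroup 4 × Zc 2) (DihedralGroup 4 × Zc 2) ∨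
    HasPlanarExtensions N (DihedralGroup 6) (DihedralGroup 6 × Zc 2) (DihedralGroup 6 × Zc 2) := by
  obtain ⟨n, hn, h⟩ := h
  have hD1 : Nonempty (DihedralGroup 1 ≃* Zc 2) :=
    ⟨mulEquivOfPrimeCardEq (p := 2) nat_card (natCard_Zc 2)⟩
  simp only [crystallographicOrders, Finset.mem_insert, Finset.mem_singleton] at hn
  rcases hn with rfl | rfl | rfl | rfl | rfl <;> rcases h with ⟨⟨e⟩⟩ | ⟨⟨e⟩⟩
  · exact .inl (of_natCard_eq_one (by rw [Nat.card_congr e.toEquiv, natCard_Zc]))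
  · exact .inr <| .inl (of_mulEquiv_Zc_two (e.trans hD1.some))
  · have := of_mulEquiv_Zc_two e; tauto
  · have := of_mulEquiv_dihedralGroup (by decide) e; tauto
  · have := of_mulEquiv_Zc_three e; tauto
  · have := of_mulEquiv_dihedralGroup_of_notMem_or_odd (by decide) (by decide) e; tauto
  · have := of_mulEquiv_Zc (by decide) e; tauto
  · have := of_mulEquiv_dihedralGroup_of_notMem_or_odd (by decide) (by decide) e; tauto
  · have := of_mulEquiv_Zc (by decide) e; tauto
  · have := of_mulEquiv_dihedralGroup_of_notMem_or_odd (by decide) (by decide) e; tauto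

end PlanarPointGroups

section PlanarIsometries

theorem mul_self_of_notMem_range_rotation {f : ℂ ≃ₗᵢ[ℝ] ℂ} (hf : f ∉ rotation.range) :
    f * f = 1 := by
  obtain ⟨a, rfl | rfl⟩ := linear_isometry_complex f
  · exact absurd ⟨a, rfl⟩ hf
  · ext z
    simp [← Circle.coe_inv_eq_conj, Circle.coe_ne_zero]

theorem mul_mem_range_rotation {f g : ℂ ≃ₗᵢ[ℝ] ℂ} (hf : f ∉ rotation.range)
    (hg : g ∉ rotation.range) : f * g ∈ rotation.range := by
  obtain ⟨a, rfl | rfl⟩ := linear_isometry_complex f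
  · exact absurd ⟨a, rfl⟩ hf
  obtain ⟨b, rfl | rfl⟩ := linear_isometry_complex g
  · exact absurd ⟨b, rfl⟩ hg
  refine ⟨a * b⁻¹, LinearIsometryEquiv.ext fun z => ?_⟩
  rw [rotation_apply]
  simp [← Circle.coe_inv_eq_conj, mul_assoc]

variable {K : Type*} [Group K] [Finite K] {ρ : K →* ℂ ≃ₗᵢ[ℝ] ℂ}

theorem exists_zpowers_eq_comap_range_rotation (hρ : Function.Injective ρ) :
    ∃ x : K, zpowers x = rotation.range.comap ρ := by
  let angle : rotation.range.comap ρ →* Circle :=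
    (MonoidHom.ofInjective rotation_injective).symm.toMonoidHom.comp
      (ρ.subgroupComap rotation.range)
  have hangle (g) : rotation (angle g) = ρ g :=
    congrArg Subtype.val ((MonoidHom.ofInjective rotation_injective).apply_symm_apply
      (ρ.subgroupComap rotation.range g))
  have hinj : Function.Injective angle := fun g h hgh =>
    Subtype.ext (hρ (by rw [← hangle, ← hangle, hgh]))
  have : IsCyclic (rotation.range.comap ρ) := isCyclic_of_injective_ringHom (R := ℂ)
    (Circle.coeHom.comp angle) (Subtype.val_injective.comp hinj)
  exact (Subgroup.isCyclic_iff_exists_zpowers_eq_top _).1 this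

theorem isPlanarPointGroup_of_injective (hρ : Function.Injective ρ)
    (hord : ∀ g a, ρ g = rotation a → orderOf a ∈ crystallographicOrders) :
    IsPlanarPointGroup K := by
  obtain ⟨x, hx⟩ := exists_zpowers_eq_comap_range_rotation hρ
  have hmem {g : K} : g ∉ zpowers x ↔ ρ g ∉ rotation.range := by rw [hx]; rfl
  obtain ⟨a, ha⟩ : ρ x ∈ rotation.range := hx.le (mem_zpowers x)
  refine ⟨orderOf x, ?_, ?_⟩
  · rw [← orderOf_injective ρ hρ, ← ha, orderOf_injective rotation rotation_injective]
    exact hord x a ha.symm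
  by_cases h : ∃ s, s ∉ zpowers x
  · obtain ⟨s, hs⟩ := h
    refine .inr (nonempty_mulEquiv_dihedralGroup hs (fun t ht => hρ ?_) fun t ht u hu => ?_)
    · rw [map_mul, map_one, mul_self_of_notMem_range_rotation (hmem.1 ht)]
    · rw [hx, mem_comap, map_mul]
      exact mul_mem_range_rotation (hmem.1 ht) (hmem.1 hu)
  · push Not at h
    rw [orderOf_eq_card_of_forall_mem_zpowers h]
    exact .inl ⟨(zmodCyclicMulEquiv ⟨x, h⟩).symm⟩

theorem isPlanarExtension_comap_zpowers_sr {G : Type*} [Group G] {π : G →* DihedralGroup 0}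
    {ρ : G →* ℂ ≃ₗᵢ[ℝ] ℂ} [Finite π.ker] (hπ : Function.Surjective π) (hπρ : Disjoint π.ker ρ.ker)
    (hord : ∀ g a, ρ g = rotation a → orderOf a ∈ crystallographicOrders) (k : ZMod 0) :
    IsPlanarExtension π.ker ((zpowers (sr k)).comap π) := by
  set S := (zpowers (sr k)).comap π
  let e := subgroupOfEquivOfLe (ker_le_comap π _ : π.ker ≤ S)
  have hcard : Nat.card S = 2 * Nat.card π.ker := by
    rw [← relIndex_ker_comap_zpowers_sr hπ k, ← Nat.card_congr e.toEquiv]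
    exact (index_mul_card _).symm
  have : Finite S := Nat.finite_of_card_ne_zero (hcard ▸ (mul_pos two_pos Nat.card_pos).ne')
  have hdisj : Disjoint (π.ker.subgroupOf S) (ρ.comp S.subtype).ker := by
    rw [← MonoidHom.comap_ker, disjoint_iff, subgroupOf, ← comap_inf, hπρ.eq_bot,
      MonoidHom.comap_bot, ker_subtype]
  rcases nonempty_mulEquiv_prod_or_injective (relIndex_ker_comap_zpowers_sr hπ k) hdisj
    with ⟨⟨f⟩⟩ | h
  · exact .inl ⟨f.trans (.prodCongr e (.refl _))⟩
  · exact .inr ⟨isPlanarPointGroup_of_injective h fun g => hord g, hcard⟩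

end PlanarIsometries

open Metric
open scoped RealInnerProductSpace commutatorElement

section DisplacementCone

variable {V : Type*} [NormedAddCommGroup V] [InnerProductSpace ℝ V] (A : V ≃ₗᵢ[ℝ] V)

/-- The open cone of vectors that the linear isometry `A` displaces by more than a factor `κ`. It is
used for `κ ^ 2` not an eigenvalue of `2 - A - A⁻¹`, when `A - 1` maps it well into itself. -/
def displacementCone (κ : ℝ) : Set V :=
  {x | κ * ‖x‖ < ‖A x - x‖}

variable {A} {κ : ℝ}

theorem isOpen_displacementCone : IsOpen (displacementCone A κ) :=
  isOpen_lt (by fun_prop) (by fun_prop)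

theorem smul_mem_displacementCone_iff {t : ℝ} (ht : t ≠ 0) {x : V} :
    t • x ∈ displacementCone A κ ↔ x ∈ displacementCone A κ := by
  have : 0 < ‖t‖ := norm_pos_iff.2 ht
  rw [displacementCone, Set.mem_ofPred_eq, Set.mem_ofPred_eq, map_smul, ← smul_sub, norm_smul,
    norm_smul, mul_left_comm, mul_lt_mul_iff_right₀ this]

theorem ne_zero_of_mem_displacementCone {x : V} (hx : x ∈ displacementCone A κ) : x ≠ 0 := by
  rintro rfl
  simp [displacementCone] at hx

/-- With `T = A - 1`, the map `2 - A - A⁻¹` is `T* T`, whose eigenvalues are the squares of the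
singular values of `T`. -/
theorem norm_two_smul_sub_sub_smul_sq (A : V ≃ₗᵢ[ℝ] V) (k : ℝ) (x : V) :
    ‖(2 : ℝ) • x - A x - A.symm x - k • x‖ ^ 2 =
      ‖A (A x - x) - (A x - x)‖ ^ 2 - 2 * k * ‖A x - x‖ ^ 2 + k ^ 2 * ‖x‖ ^ 2 := by
  have hnorm : ‖(2 : ℝ) • x - A x - A.symm x‖ = ‖A (A x - x) - (A x - x)‖ := by
    rw [← A.norm_map, ← norm_neg]
    congr 1
    simp only [map_sub, map_smul, A.apply_symm_apply]
    module
  have hinner : ⟪(2 : ℝ) • x - A x - A.symm x, x⟫ = ‖A x - x‖ ^ 2 := by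
    have hsymm : ⟪A.symm x, x⟫ = ⟪A x, x⟫ := by
      rw [← A.inner_map_map, A.apply_symm_apply, real_inner_comm]
    rw [norm_sub_sq_real, A.norm_map, inner_sub_left, inner_sub_left, real_inner_smul_left, hsymm,
      real_inner_self_eq_norm_sq]
    ring
  rw [norm_sub_sq_real, hnorm, real_inner_smul_right, hinner, norm_smul, mul_pow,
    Real.norm_eq_abs, sq_abs]
  ring

theorem map_sub_self_mem_displacementCone (hκ : 0 < κ) {x : V}
    (hx : κ * ‖x‖ ≤ ‖A x - x‖) (hx' : (2 : ℝ) • x - A x - A.symm x ≠ κ ^ 2 • x) :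
    A x - x ∈ displacementCone A κ := by
  by_contra h
  have hle : ‖A (A x - x) - (A x - x)‖ ≤ κ * ‖A x - x‖ := not_lt.1 h
  have hpos : 0 < ‖(2 : ℝ) • x - A x - A.symm x - κ ^ 2 • x‖ ^ 2 :=
    pow_pos (norm_pos_iff.2 (sub_ne_zero.2 hx')) 2
  rw [norm_two_smul_sub_sub_smul_sq] at hpos
  have h₁ : ‖A (A x - x) - (A x - x)‖ ^ 2 ≤ (κ * ‖A x - x‖) ^ 2 := by gcongr
  have h₂ : κ ^ 2 * (κ * ‖x‖) ^ 2 ≤ κ ^ 2 * ‖A x - x‖ ^ 2 := by gcongr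
  linarith

variable [FiniteDimensional ℝ V]

theorem exists_forall_map_sub_self_add_mem_displacementCone (hκ : 0 < κ)
    (h : ∀ x ≠ 0, (2 : ℝ) • x - A x - A.symm x ≠ κ ^ 2 • x) :
    ∃ η > 0, ∀ x ∈ displacementCone A κ, ∀ r, ‖r‖ ≤ η * ‖x‖ →
      A x - x + r ∈ displacementCone A κ := by
  let D : Set V := sphere 0 1 ∩ {x | κ * ‖x‖ ≤ ‖A x - x‖}
  have hD : IsCompact ((fun x => A x - x) '' D) :=
    ((isCompact_sphere 0 1).inter_right (isClosed_le (by fun_prop) (by fun_prop))).image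
      (by fun_prop)
  have hDC : (fun x => A x - x) '' D ⊆ displacementCone A κ := by
    rintro _ ⟨x, hx, rfl⟩
    exact map_sub_self_mem_displacementCone hκ hx.2 (h x (ne_zero_of_mem_unit_sphere ⟨x, hx.1⟩))
  obtain ⟨δ, hδ, hthick⟩ := hD.exists_cthickening_subset_open isOpen_displacementCone hDC
  refine ⟨δ, hδ, fun x hx r hr => ?_⟩
  have hx₀ : ‖x‖ ≠ 0 := norm_ne_zero_iff.2 (ne_zero_of_mem_displacementCone hx)
  have hy : ‖x‖⁻¹ • x ∈ D :=
    ⟨by simp [norm_smul, hx₀],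
      Set.mem_ofPred.2 (le_of_lt ((smul_mem_displacementCone_iff (inv_ne_zero hx₀)).2 hx))⟩
  rw [← smul_mem_displacementCone_iff (inv_ne_zero hx₀)]
  refine hthick (mem_cthickening_of_dist_le _ _ _ _ ⟨_, hy, rfl⟩ ?_)
  rw [dist_eq_norm, smul_add, smul_sub, ← map_smul, add_sub_cancel_left, norm_smul, norm_inv,
    norm_norm, inv_mul_le_iff₀ (by positivity), mul_comm]
  exact hr

theorem exists_nonempty_displacementCone_forall_ne (hA : A ≠ 1) :
    ∃ κ > 0, (displacementCone A κ).Nonempty ∧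
      ∀ x ≠ 0, (2 : ℝ) • x - A x - A.symm x ≠ κ ^ 2 • x := by
  obtain ⟨u, hu⟩ : ∃ u, A u ≠ u := by
    by_contra! h
    exact hA (LinearIsometryEquiv.ext h)
  have hu₀ : 0 < ‖u‖ := norm_pos_iff.2 (by rintro rfl; exact hu (map_zero A))
  have hAu : 0 < ‖A u - u‖ := norm_pos_iff.2 (sub_ne_zero.2 hu)
  let S : Module.End ℝ V := (2 : ℝ) • LinearMap.id - A.toLinearMap - A.symm.toLinearMap
  have hfin : {κ : ℝ | κ ∈ Set.Ioi 0 ∧ S.HasEigenvalue (κ ^ 2)}.Finite := by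
    refine Set.Finite.of_finite_image (S.finite_hasEigenvalue.subset (?_ : (· ^ 2) '' _ ⊆ _))
      fun a ha b hb => (pow_left_inj₀ ha.1.le hb.1.le two_ne_zero).1
    rintro _ ⟨κ, hκ, rfl⟩
    exact hκ.2
  obtain ⟨κ, ⟨hκ, hκu⟩, hS⟩ := ((Set.Ioo_infinite (div_pos hAu hu₀)).sdiff hfin).nonempty
  refine ⟨κ, hκ, ⟨u, (lt_div_iff₀ hu₀).1 hκu⟩, fun x hx hSx => hS ⟨hκ, ?_⟩⟩
  exact Module.End.hasEigenvalue_of_hasEigenvector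
    (Module.End.hasEigenvector_iff.2 ⟨Module.End.mem_eigenspace_iff.2 hSx, hx⟩)

end DisplacementCone

section LinearPart

variable {V : Type*} [NormedAddCommGroup V] [NormedSpace ℝ V]

/-- The linear part of an isometry, as a homomorphism; by the Mazur–Ulam theorem every isometry of a
real normed space has one. -/
def linPart : (V ≃ᵢ V) →* (V ≃ₗᵢ[ℝ] V) where
  toFun γ := γ.toRealLinearIsometryEquiv
  map_one' := by
    ext x
    simp
  map_mul' γ δ := by
    ext x
    rw [LinearIsometryEquiv.coe_mul, Function.comp_apply, δ.toRealLinearIsometryEquiv_apply,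
      map_sub]
    simp

theorem linPart_apply (γ : V ≃ᵢ V) (x : V) : linPart γ x = γ x - γ 0 :=
  γ.toRealLinearIsometryEquiv_apply x

theorem apply_eq_linPart_add (γ : V ≃ᵢ V) (x : V) : γ x = linPart γ x + γ 0 := by
  rw [linPart_apply, sub_add_cancel]

variable {c d ε : ℝ}

theorem norm_commutator_sub_le {A B : V ≃ₗᵢ[ℝ] V} (hc : 0 ≤ c) (hA : ∀ x, ‖A x - x‖ ≤ c * ‖x‖)
    (hd : 0 ≤ d) (hB : ∀ x, ‖B x - x‖ ≤ d * ‖x‖) (x : V) :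
    ‖⁅A, B⁆ x - x‖ ≤ 2 * c * d * ‖x‖ := by
  obtain ⟨y, rfl⟩ := (B * A).surjective x
  have hcomm : ⁅A, B⁆ ((B * A) y) = A (B y) :=
    DFunLike.congr_fun (by group : ⁅A, B⁆ * (B * A) = A * B) y
  have hsplit : ⁅A, B⁆ ((B * A) y) - (B * A) y =
      (A (B y - y) - (B y - y)) - (B (A y - y) - (A y - y)) := by
    rw [hcomm, LinearIsometryEquiv.coe_mul, Function.comp_apply, map_sub, map_sub]
    abel
  calc ‖⁅A, B⁆ ((B * A) y) - (B * A) y‖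
      ≤ c * ‖B y - y‖ + d * ‖A y - y‖ :=
        hsplit ▸ (norm_sub_le _ _).trans (add_le_add (hA _) (hB _))
    _ ≤ c * (d * ‖y‖) + d * (c * ‖y‖) := by gcongr <;> [exact hB y; exact hA y]
    _ = 2 * c * d * ‖(B * A) y‖ := by rw [LinearIsometryEquiv.norm_map]; ring

theorem norm_commutator_apply_zero_sub_le {α β : V ≃ᵢ V}
    (hβ : ∀ x, ‖linPart β x - x‖ ≤ ε * ‖x‖)
    (hαβ : ∀ x, ‖linPart ⁅α, β⁆ x - x‖ ≤ ε * ‖x‖) :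
    ‖⁅α, β⁆ 0 - (linPart α (β 0) - β 0)‖ ≤ ε * (‖α 0‖ + ‖β 0‖) := by
  obtain ⟨y, hy⟩ := (linPart α).surjective (α 0)
  have hcomm : ⁅α, β⁆ (β (α 0)) = α (β 0) :=
    DFunLike.congr_fun (by group : ⁅α, β⁆ * (β * α) = α * β) 0
  have hconj : linPart ⁅α, β⁆ (linPart β (α 0)) = linPart α (linPart β y) := by
    have h := congrArg linPart (by group : ⁅α, β⁆ * β * α = α * β)
    rw [← hy]
    simpa only [map_mul, LinearIsometryEquiv.coe_mul, Function.comp_apply]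
      using DFunLike.congr_fun h y
  have hsplit : ⁅α, β⁆ 0 - (linPart α (β 0) - β 0) =
      -linPart α (linPart β y - y) - (linPart ⁅α, β⁆ (β 0) - β 0) := by
    rw [apply_eq_linPart_add ⁅α, β⁆, apply_eq_linPart_add β (α 0), apply_eq_linPart_add α (β 0),
      map_add, hconj, ← hy] at hcomm
    rw [map_sub, eq_sub_of_add_eq' hcomm]
    abel
  calc ‖⁅α, β⁆ 0 - (linPart α (β 0) - β 0)‖
      ≤ ‖linPart β y - y‖ + ‖linPart ⁅α, β⁆ (β 0) - β 0‖ := by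
        rw [hsplit]
        refine (norm_sub_le _ _).trans_eq ?_
        rw [norm_neg, LinearIsometryEquiv.norm_map]
    _ ≤ ε * ‖y‖ + ε * ‖β 0‖ := add_le_add (hβ y) (hαβ _)
    _ = ε * (‖α 0‖ + ‖β 0‖) := by rw [← hy, LinearIsometryEquiv.norm_map, mul_add]

theorem exists_strictMono_forall_norm_sub_le [FiniteDimensional ℝ V] (A : ℕ → V ≃ₗᵢ[ℝ] V)
    (hε : 0 < ε) :
    ∃ φ : ℕ → ℕ, StrictMono φ ∧ ∀ i j x, ‖A (φ i) x - A (φ j) x‖ ≤ ε * ‖x‖ := by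
  let f (k : ℕ) : V →L[ℝ] V := (A k).toContinuousLinearEquiv
  have hf (k) : f k ∈ closedBall 0 1 :=
    mem_closedBall_zero_iff.2 (A k).toLinearIsometry.norm_toContinuousLinearMap_le
  have : ProperSpace (V →L[ℝ] V) := FiniteDimensional.proper ℝ _
  obtain ⟨_, -, φ, hφ, hlim⟩ := (isCompact_closedBall _ _).tendsto_subseq hf
  obtain ⟨N, hN⟩ := Metric.cauchySeq_iff.1 hlim.cauchySeq ε hε
  refine ⟨fun k => φ (N + k), hφ.comp (add_right_strictMono), fun i j x => ?_⟩
  calc ‖A (φ (N + i)) x - A (φ (N + j)) x‖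
      ≤ ‖f (φ (N + i)) - f (φ (N + j))‖ * ‖x‖ := (f (φ (N + i)) - f (φ (N + j))).le_opNorm x
    _ ≤ ε * ‖x‖ := by
      gcongr
      exact (dist_eq_norm _ _).symm.trans_le (hN _ (N.le_add_right i) _ (N.le_add_right j)).le

end LinearPart

namespace IsCrystallographic

variable {n : ℕ} {Γ : Subgroup (Isom n)}

theorem finite_setOf_apply_mem_closedBall (hΓ : IsCrystallographic Γ) (x y : E n) (R : ℝ) :
    {γ : Isom n | γ ∈ Γ ∧ γ x ∈ closedBall y R}.Finite :=
  (hΓ.1 {x} (closedBall y R) isCompact_singleton (isCompact_closedBall y R)).subset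
    fun γ hγ => ⟨hγ.1, γ x, ⟨x, rfl, rfl⟩, hγ.2⟩

theorem exists_forall_exists_norm_apply_zero_sub_le (hΓ : IsCrystallographic Γ) :
    ∃ D, ∀ x : E n, ∃ γ ∈ Γ, ‖γ 0 - x‖ ≤ D := by
  obtain ⟨K, hK, hΓK⟩ := hΓ.2
  obtain ⟨D, hD⟩ := hK.isBounded.exists_norm_le
  refine ⟨D, fun x => ?_⟩
  obtain ⟨γ, hγ, hx⟩ := hΓK x
  refine ⟨γ⁻¹, inv_mem hγ, ?_⟩
  rw [← dist_eq_norm, ← γ.dist_eq, IsometryEquiv.apply_inv_self, dist_zero_left]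
  exact hD _ hx

theorem exists_forall_norm_apply_zero_le (hΓ : IsCrystallographic Γ) {P : Isom n → Prop}
    (hP : ∃ γ ∈ Γ, P γ) :
    ∃ γ ∈ Γ, P γ ∧ ∀ δ ∈ Γ, P δ → ‖γ 0‖ ≤ ‖δ 0‖ := by
  obtain ⟨γ, hγ, hPγ⟩ := hP
  have hfin : {δ : Isom n | (δ ∈ Γ ∧ δ 0 ∈ closedBall 0 ‖γ 0‖) ∧ P δ}.Finite :=
    (hΓ.finite_setOf_apply_mem_closedBall 0 0 ‖γ 0‖).subset fun δ hδ => hδ.1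
  obtain ⟨δ, hδ, hmin⟩ := Set.exists_min_image _ (fun δ : Isom n => ‖δ 0‖) hfin
    ⟨γ, ⟨hγ, mem_closedBall_zero_iff.2 le_rfl⟩, hPγ⟩
  refine ⟨δ, hδ.1.1, hδ.2, fun δ' hδ' hPδ' => ?_⟩
  rcases le_total ‖δ' 0‖ ‖γ 0‖ with h | h
  · exact hmin δ' ⟨⟨hδ', mem_closedBall_zero_iff.2 h⟩, hPδ'⟩
  · exact (mem_closedBall_zero_iff.1 hδ.1.2).trans h

/-- Among orbit points following a ray in `C`, two far apart have almost equal linear parts by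
compactness of the orthogonal group. -/
theorem exists_norm_linPart_sub_le_apply_zero_mem (hΓ : IsCrystallographic Γ) {C : Set (E n)}
    (hC : IsOpen C) (hne : C.Nonempty) (hsmul : ∀ t : ℝ, 0 < t → ∀ x, t • x ∈ C → x ∈ C)
    {ε : ℝ} (hε : 0 < ε) :
    ∃ β ∈ Γ, (∀ x, ‖linPart β x - x‖ ≤ ε * ‖x‖) ∧ β 0 ∈ C := by
  obtain ⟨u, hu⟩ := hne
  obtain ⟨δ, hδ, hball⟩ := Metric.isOpen_iff.1 hC u hu
  obtain ⟨D, hD⟩ := hΓ.exists_forall_exists_norm_apply_zero_sub_le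
  choose γ hγ hγD using fun k : ℕ => hD ((k : ℝ) • u)
  obtain ⟨φ, hφ, hnear⟩ := exists_strictMono_forall_norm_sub_le (fun k => linPart (γ k)) hε
  obtain ⟨j, hj⟩ := exists_nat_gt (max 0 ((‖γ (φ 0) 0‖ + D) / δ))
  have hjφ : (j : ℝ) ≤ φ j := by exact_mod_cast hφ.le_apply
  have hpos : (0 : ℝ) < φ j := (le_max_left _ _).trans_lt (hj.trans_le hjφ)
  let β := γ (φ j) * (γ (φ 0))⁻¹
  have hβ : β (γ (φ 0) 0) = γ (φ j) 0 := by
    rw [← IsometryEquiv.mul_apply, inv_mul_cancel_right]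
  have hβu : ‖β 0 - (φ j : ℝ) • u‖ < φ j * δ := calc
    ‖β 0 - (φ j : ℝ) • u‖ ≤ ‖β 0 - γ (φ j) 0‖ + ‖γ (φ j) 0 - (φ j : ℝ) • u‖ :=
      norm_sub_le_norm_sub_add_norm_sub _ _ _
    _ ≤ ‖γ (φ 0) 0‖ + D := by
      rw [← hβ, ← dist_eq_norm, β.dist_eq, dist_zero_left, hβ]
      gcongr
      exact hγD _
    _ < φ j * δ := (div_lt_iff₀ hδ).1 ((le_max_right _ _).trans_lt (hj.trans_le hjφ))
  refine ⟨β, mul_mem (hγ _) (inv_mem (hγ _)), fun x => ?_,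
    hsmul _ (inv_pos.2 hpos) _ (hball ?_)⟩
  · obtain ⟨y, rfl⟩ := (linPart (γ (φ 0))).surjective x
    have hy : linPart β (linPart (γ (φ 0)) y) = linPart (γ (φ j)) y :=
      DFunLike.congr_fun ((map_mul linPart _ _).symm.trans
        (congrArg linPart (inv_mul_cancel_right _ _))) y
    rw [hy, LinearIsometryEquiv.norm_map]
    exact hnear j 0 y
  · rw [mem_ball_iff_norm, ← inv_smul_smul₀ hpos.ne' u, ← smul_sub, norm_smul, norm_inv,
      Real.norm_natCast, inv_mul_lt_iff₀ hpos]
    simpa using hβu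

/-- Otherwise take `α ∈ Γ` with `linPart α ≠ 1` near the identity and shortest translation part, and
`β ∈ Γ` with linear part still nearer the identity and shortest translation part in a displacement
cone of `α`. The commutator of `α` and `β` then has the properties of `β` and a shorter translation
part. -/
theorem linPart_eq_one_of_norm_sub_le (hΓ : IsCrystallographic Γ) {γ : Isom n} (hγ : γ ∈ Γ)
    (hnear : ∀ x, ‖linPart γ x - x‖ ≤ 1 / 2 * ‖x‖) : linPart γ = 1 := by
  by_contra hne
  obtain ⟨α, hα, ⟨hαnear, hα₁⟩, hαmin⟩ := hΓ.exists_forall_norm_apply_zero_le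
    (P := fun α => (∀ x, ‖linPart α x - x‖ ≤ 1 / 2 * ‖x‖) ∧ linPart α ≠ 1) ⟨γ, hγ, hnear, hne⟩
  obtain ⟨κ, hκ, hC, hκne⟩ := exists_nonempty_displacementCone_forall_ne hα₁
  obtain ⟨η, hη, hstable⟩ := exists_forall_map_sub_self_add_mem_displacementCone hκ hκne
  let ε := min (1 / 8) (η / 2)
  have hε : 0 < ε := by positivity
  have hε₁ : ε ≤ 1 / 8 := min_le_left _ _
  have hε₂ : ε ≤ η / 2 := min_le_right _ _
  obtain ⟨β, hβ, ⟨hβnear, hβC⟩, hβmin⟩ := hΓ.exists_forall_norm_apply_zero_le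
    (hΓ.exists_norm_linPart_sub_le_apply_zero_mem isOpen_displacementCone hC
      (fun t ht x => (smul_mem_displacementCone_iff ht.ne').1) hε)
  have hcomm {d : ℝ} (hd : 0 ≤ d) (hβd : ∀ x, ‖linPart β x - x‖ ≤ d * ‖x‖) (x : E n) :
      ‖linPart ⁅α, β⁆ x - x‖ ≤ d * ‖x‖ := by
    rw [map_commutatorElement]
    refine (norm_commutator_sub_le (by positivity) hαnear hd hβd x).trans_eq (by ring)
  have hrem : ‖⁅α, β⁆ 0 - (linPart α (β 0) - β 0)‖ ≤ 2 * ε * ‖β 0‖ := by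
    by_cases hβ₁ : linPart β = 1
    · have hβ₀ (x) : ‖linPart β x - x‖ ≤ 0 * ‖x‖ := by simp [hβ₁]
      refine (norm_commutator_apply_zero_sub_le hβ₀ (hcomm le_rfl hβ₀)).trans ?_
      rw [zero_mul]
      positivity
    · have hαβ : ‖α 0‖ ≤ ‖β 0‖ :=
        hαmin β hβ ⟨fun x => (hβnear x).trans (by gcongr; linarith), hβ₁⟩
      refine (norm_commutator_apply_zero_sub_le hβnear (hcomm hε.le hβnear)).trans ?_
      nlinarith
  have hlt : ‖⁅α, β⁆ 0‖ < ‖β 0‖ := by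
    have hpos := norm_pos_iff.2 (ne_zero_of_mem_displacementCone hβC)
    have htri := norm_le_norm_add_norm_sub' (⁅α, β⁆ 0) (linPart α (β 0) - β 0)
    nlinarith [hαnear (β 0)]
  refine hlt.not_ge (hβmin _ ?_ ⟨hcomm hε.le hβnear, ?_⟩)
  · exact mul_mem (mul_mem (mul_mem hα hβ) (inv_mem hα)) (inv_mem hβ)
  · rw [← add_sub_cancel (linPart α (β 0) - β 0) (⁅α, β⁆ 0)]
    exact hstable _ hβC _ (hrem.trans (by gcongr; linarith))

end IsCrystallographic

section Translations

variable {V : Type*} [NormedAddCommGroup V]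

/-- The translations of `V`, as a homomorphism into its isometry group. -/
def translation : Multiplicative V →* (V ≃ᵢ V) where
  toFun b := IsometryEquiv.addRight b.toAdd
  map_one' := by
    ext x
    exact add_zero x
  map_mul' a b := by
    ext x
    exact (congrArg (x + ·) (add_comm _ _)).trans (add_assoc x b.toAdd a.toAdd).symm

theorem translation_ofAdd_apply (b x : V) : translation (.ofAdd b) x = x + b :=
  rfl

theorem translation_injective : Function.Injective (translation (V := V)) :=
  fun a b h => Multiplicative.toAdd.injective
    (add_left_cancel (DFunLike.congr_fun h 0 : 0 + a.toAdd = 0 + b.toAdd))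

theorem orderOf_translation [IsAddTorsionFree V] {a : V} (ha : a ≠ 0) :
    orderOf (translation (.ofAdd a)) = 0 := by
  rw [orderOf_injective (translation (V := V)) translation_injective, orderOf_eq_zero_iff]
  exact not_isOfFinOrder_of_isMulTorsionFree (mt ofAdd_eq_one.1 ha)

/-- The additive group of vectors by which the elements of `Γ` translate; a lattice if `Γ` is
crystallographic. -/
def translationLattice (Γ : Subgroup (V ≃ᵢ V)) : AddSubgroup V :=
  toAddSubgroup' (Γ.comap translation)

variable {Γ : Subgroup (V ≃ᵢ V)}

theorem discreteTopology_translationLattice (h : {γ | γ ∈ Γ ∧ γ 0 ∈ closedBall 0 1}.Finite) :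
    DiscreteTopology (translationLattice Γ) := by
  refine discreteTopology_of_isOpen_singleton_zero (isOpen_singleton_of_finite_mem_nhds 0
    (s := closedBall 0 1) (closedBall_mem_nhds 0 one_pos) ?_)
  refine Set.Finite.of_finite_image ((h.image (· 0)).subset ?_) Subtype.val_injective.injOn
  rintro _ ⟨b, hb, rfl⟩
  have h0 : translation (.ofAdd (b : V)) 0 = b := zero_add _
  exact ⟨translation (.ofAdd (b : V)), ⟨b.2, h0.symm ▸ hb⟩, h0⟩

variable [NormedSpace ℝ V]

theorem linPart_translation (b : Multiplicative V) : linPart (translation b) = 1 := by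
  ext x
  rw [linPart_apply, ← ofAdd_toAdd b, translation_ofAdd_apply, translation_ofAdd_apply,
    add_sub_add_right_eq_sub, sub_zero, LinearIsometryEquiv.coe_one, id_eq]

theorem eq_translation_of_linPart_eq_one {γ : V ≃ᵢ V} (hγ : linPart γ = 1) :
    γ = translation (.ofAdd (γ 0)) := by
  ext x
  rw [translation_ofAdd_apply, apply_eq_linPart_add γ x, hγ, LinearIsometryEquiv.coe_one, id_eq]

theorem apply_zero_mem_translationLattice {γ : V ≃ᵢ V} (hγ : γ ∈ Γ) (h : linPart γ = 1) :
    γ 0 ∈ translationLattice Γ :=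
  show translation _ ∈ Γ from eq_translation_of_linPart_eq_one h ▸ hγ

theorem linPart_mem_translationLattice {γ : V ≃ᵢ V} (hγ : γ ∈ Γ) {b : V}
    (hb : b ∈ translationLattice Γ) : linPart γ b ∈ translationLattice Γ := by
  have hconj : (γ * translation (.ofAdd b) * γ⁻¹) 0 = linPart γ b := by
    rw [IsometryEquiv.mul_apply, IsometryEquiv.mul_apply, translation_ofAdd_apply,
      apply_eq_linPart_add γ, map_add, add_right_comm, ← apply_eq_linPart_add,
      IsometryEquiv.apply_inv_self, zero_add]
  rw [← hconj]
  refine apply_zero_mem_translationLattice (mul_mem (mul_mem hγ hb) (inv_mem hγ)) ?_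
  rw [map_mul, map_mul, linPart_translation, mul_one, ← map_mul, mul_inv_cancel, map_one]

end Translations

theorem exists_int_trace_eq {V : Type*} [NormedAddCommGroup V] [NormedSpace ℝ V]
    [FiniteDimensional ℝ V] (L : Submodule ℤ V) [DiscreteTopology L] [IsZLattice ℝ L]
    {f : V →ₗ[ℝ] V} (hf : ∀ x ∈ L, f x ∈ L) : ∃ k : ℤ, LinearMap.trace ℝ V f = k := by
  let b := Module.Free.chooseBasis ℤ L
  refine ⟨∑ i, b.repr ⟨f (b i), hf _ (b i).2⟩ i, ?_⟩
  rw [LinearMap.trace_eq_matrix_trace ℝ (b.ofZLatticeBasis ℝ L), Matrix.trace, Int.cast_sum]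
  refine Finset.sum_congr rfl fun i _ => ?_
  rw [Matrix.diag_apply, LinearMap.toMatrix_apply, Module.Basis.ofZLatticeBasis_apply]
  exact b.ofZLatticeBasis_repr_apply ℝ L ⟨f (b i), hf _ (b i).2⟩ i

namespace IsCrystallographic

variable {n : ℕ} {Γ : Subgroup (Isom n)}

theorem span_translationLattice (hΓ : IsCrystallographic Γ) :
    Submodule.span ℝ (translationLattice Γ : Set (E n)) = ⊤ := by
  set W := Submodule.span ℝ (translationLattice Γ : Set (E n))
  by_contra hW
  obtain ⟨β, hβ, hnear, hβW⟩ := hΓ.exists_norm_linPart_sub_le_apply_zero_mem (ε := 1 / 2)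
    W.closed_of_finiteDimensional.isOpen_compl
    (Set.nonempty_compl.2 fun h => hW (SetLike.coe_injective h))
    (fun t _ x => mt (W.smul_mem t)) (by norm_num)
  exact hβW (Submodule.subset_span
    (apply_zero_mem_translationLattice hβ (hΓ.linPart_eq_one_of_norm_sub_le hβ hnear)))

theorem exists_int_trace_linPart_eq (hΓ : IsCrystallographic Γ) {γ : Isom n} (hγ : γ ∈ Γ) :
    ∃ k : ℤ, LinearMap.trace ℝ (E n) (linPart γ).toLinearEquiv = k := by
  have : DiscreteTopology (translationLattice Γ).toIntSubmodule :=
    discreteTopology_translationLattice (hΓ.finite_setOf_apply_mem_closedBall 0 0 1)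
  have : IsZLattice ℝ (translationLattice Γ).toIntSubmodule := ⟨hΓ.span_translationLattice⟩
  exact exists_int_trace_eq (translationLattice Γ).toIntSubmodule
    fun _ => linPart_mem_translationLattice hγ

end IsCrystallographic

section RealLine

theorem linearIsometryEquiv_real_eq_one_or_eq_neg (A : ℝ ≃ₗᵢ[ℝ] ℝ) :
    A = 1 ∨ A = LinearIsometryEquiv.neg ℝ := by
  have hA (x : ℝ) : A x = x * A 1 := by rw [← smul_eq_mul, ← map_smul, smul_eq_mul, mul_one]
  have h1 : |A 1| = 1 := (A.norm_map 1).trans norm_one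
  rcases eq_or_eq_neg_of_abs_eq h1 with h | h
  · refine .inl (LinearIsometryEquiv.ext fun x => ?_)
    rw [hA, h, mul_one, LinearIsometryEquiv.coe_one, id_eq]
  · refine .inr (LinearIsometryEquiv.ext fun x => ?_)
    rw [hA, h, mul_neg_one, LinearIsometryEquiv.coe_neg]

theorem linPart_mul_eq_one {f g : ℝ ≃ᵢ ℝ} (hf : linPart f ≠ 1) (hg : linPart g ≠ 1) :
    linPart (f * g) = 1 := by
  rw [map_mul, (linearIsometryEquiv_real_eq_one_or_eq_neg _).resolve_left hf,
    (linearIsometryEquiv_real_eq_one_or_eq_neg _).resolve_left hg]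
  ext x
  exact neg_neg x

theorem mul_self_eq_one_of_linPart_ne_one {f : ℝ ≃ᵢ ℝ} (hf : linPart f ≠ 1) : f * f = 1 := by
  ext x
  rw [IsometryEquiv.mul_apply, apply_eq_linPart_add f (f x), apply_eq_linPart_add f x,
    (linearIsometryEquiv_real_eq_one_or_eq_neg _).resolve_left hf, LinearIsometryEquiv.coe_neg]
  simp

variable {H : Subgroup (ℝ ≃ᵢ ℝ)}

theorem translationLattice_ne_bot {s : ℝ ≃ᵢ ℝ} (hs : s ∈ H) (hs' : linPart s ≠ 1)
    (hcc : ∃ C, ∀ t, ∃ h ∈ H, |h t| ≤ C) : translationLattice H ≠ ⊥ := by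
  intro hbot
  have hH {h} (hh : h ∈ H) (hlin : linPart h = 1) : h = 1 := by
    have h0 : h 0 = 0 := hbot.le (apply_zero_mem_translationLattice hh hlin)
    rw [eq_translation_of_linPart_eq_one hlin, h0, ofAdd_zero, map_one]
  obtain ⟨C, hC⟩ := hcc
  obtain ⟨t, ht⟩ := exists_gt (max C (C + |s 0|))
  obtain ⟨h, hh, htC⟩ := hC t
  have hh' : h = 1 ∨ h = s := by
    refine or_iff_not_imp_left.2 fun hne => ?_
    have hsh : s * h = 1 := hH (mul_mem hs hh) (linPart_mul_eq_one hs' (mt (hH hh) hne))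
    exact mul_left_cancel (hsh.trans (mul_self_eq_one_of_linPart_ne_one hs').symm)
  rcases hh' with rfl | rfl
  · exact ((le_max_left _ _).trans_lt ht).not_ge ((le_abs_self t).trans htC)
  · have htle : t ≤ C + |h 0| := calc
      t ≤ dist (h t) (h 0) := by
        rw [h.dist_eq, Real.dist_eq, sub_zero]
        exact le_abs_self t
      _ ≤ C + |h 0| := (abs_sub _ _).trans (add_le_add_left htC _)
    exact htle.not_gt ((le_max_right _ _).trans_lt ht)

theorem nonempty_mulEquiv_dihedralGroup_zero (hs : ∃ s ∈ H, linPart s ≠ 1)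
    (hfin : {h | h ∈ H ∧ h 0 ∈ closedBall 0 1}.Finite)
    (hcc : ∃ C, ∀ t, ∃ h ∈ H, |h t| ≤ C) : Nonempty (H ≃* DihedralGroup 0) := by
  obtain ⟨s, hs, hs'⟩ := hs
  have := discreteTopology_translationLattice hfin
  obtain ⟨a, ha⟩ := (AddSubgroup.isAddCyclic_iff_exists_zmultiples_eq_top _).1
    (AddSubgroup.discrete_iff_addCyclic.2 this)
  have haH : a ∈ translationLattice H := ha.le (AddSubgroup.mem_zmultiples a)
  let x : H := ⟨translation (.ofAdd a), haH⟩
  have hx {h : H} : h ∈ zpowers x ↔ linPart (h : ℝ ≃ᵢ ℝ) = 1 := by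
    constructor
    · rintro ⟨k, rfl⟩
      exact (congrArg linPart (map_zpow (translation (V := ℝ)) _ k)).symm.trans
        (linPart_translation _)
    · intro hh
      obtain ⟨k, hk⟩ := ha.ge (apply_zero_mem_translationLattice h.2 hh)
      refine ⟨k, Subtype.ext ?_⟩
      rw [eq_translation_of_linPart_eq_one hh, ← hk]
      exact (map_zpow (translation (V := ℝ)) _ k).symm
  have ha0 : a ≠ 0 := by
    rintro rfl
    exact translationLattice_ne_bot hs hs' hcc (ha.symm.trans AddSubgroup.zmultiples_zero_eq_bot)
  rw [← (Subgroup.orderOf_coe x).symm.trans (orderOf_translation ha0)]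
  refine nonempty_mulEquiv_dihedralGroup (s := ⟨s, hs⟩) (mt hx.1 hs') (fun t ht => ?_)
    fun t ht u hu => hx.2 (linPart_mul_eq_one (mt hx.2 ht) (mt hx.2 hu))
  exact Subtype.ext (mul_self_eq_one_of_linPart_ne_one (mt hx.2 ht))

end RealLine

section InvariantLine

theorem exists_monoidHom_isometryEquiv {G X Y : Type*} [Group G] [EMetricSpace X]
    [PseudoEMetricSpace Y] {J : X → Y} (hJ : Isometry J) (α : G →* (Y ≃ᵢ Y))
    (hα : ∀ g x, α g (J x) ∈ Set.range J) :
    ∃ θ : G →* (X ≃ᵢ X), ∀ g x, J (θ g x) = α g (J x) := by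
  choose f hf using hα
  have hone (x) : f 1 x = x := hJ.injective (by rw [hf, map_one]; rfl)
  have hmul (g h x) : f (g * h) x = f g (f h x) := hJ.injective (by
    rw [hf, hf, hf, map_mul, IsometryEquiv.mul_apply])
  have hiso (g) : Isometry (f g) := fun x y => by
    rw [← hJ.edist_eq, hf, hf, (α g).edist_eq, hJ.edist_eq]
  have hinv (g x) : f g (f g⁻¹ x) = x := by rw [← hmul, mul_inv_cancel, hone]
  exact ⟨⟨⟨fun g => .mk' (f g) (f g⁻¹) (hinv g) (hiso g), IsometryEquiv.ext hone⟩,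
    fun g h => IsometryEquiv.ext (hmul g h)⟩, hf⟩

theorem IsLine.exists_range_eq {n : ℕ} {l : Set (E n)} (hl : IsLine l) {p : E n} (hp : p ∈ l) :
    ∃ v : E n, ‖v‖ = 1 ∧ (Set.range fun t : ℝ => p + t • v) = l := by
  obtain ⟨q, w, hw, rfl⟩ := hl
  obtain ⟨s, rfl⟩ := hp
  have hw' : ‖w‖ ≠ 0 := norm_ne_zero_iff.2 hw
  refine ⟨‖w‖⁻¹ • w, norm_smul_inv_norm hw, Set.ext fun x => ⟨?_, ?_⟩⟩
  · rintro ⟨t, rfl⟩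
    exact ⟨s + t * ‖w‖⁻¹, by module⟩
  · rintro ⟨t, rfl⟩
    refine ⟨(t - s) * ‖w‖, ?_⟩
    dsimp only
    rw [smul_smul, mul_assoc, mul_inv_cancel₀ hw', mul_one]
    module

section Line

variable {V : Type*} [NormedAddCommGroup V] [NormedSpace ℝ V]

theorem isometry_add_smul {p v : V} (hv : ‖v‖ = 1) : Isometry fun t : ℝ => p + t • v :=
  .of_dist_eq fun s t => by
    rw [dist_add_left, dist_eq_norm, ← sub_smul, norm_smul, hv, mul_one, Real.dist_eq,
      Real.norm_eq_abs]

theorem eq_one_of_linPart_eq_one {γ : V ≃ᵢ V} (hγ : linPart γ = 1) {p : V} (hp : γ p = p) :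
    γ = 1 := by
  rw [apply_eq_linPart_add γ p, hγ, LinearIsometryEquiv.coe_one, id_eq, add_eq_left] at hp
  rw [eq_translation_of_linPart_eq_one hγ, hp, ofAdd_zero, map_one]

theorem linPart_apply_of_forall_add_smul {p v : V} {γ : V ≃ᵢ V} {f : ℝ ≃ᵢ ℝ}
    (h : ∀ t : ℝ, p + f t • v = γ (p + t • v)) : linPart γ v = linPart f 1 • v := by
  have h0 := h 0
  have h1 := h 1
  rw [apply_eq_linPart_add γ, map_add] at h0 h1
  rw [linPart_apply f, sub_smul, ← add_sub_add_left_eq_sub _ _ p, h0, h1]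
  simp

end Line

variable {V : Type*} [NormedAddCommGroup V] [InnerProductSpace ℝ V] {v : V}

theorem linearIsometryEquiv_eq_one_of_orthogonal {A : V ≃ₗᵢ[ℝ] V} (hv : A v = v)
    (hw : ∀ w ∈ (ℝ ∙ v)ᗮ, A w = w) : A = 1 := by
  ext x
  obtain ⟨y, hy, z, hz, rfl⟩ := (ℝ ∙ v).exists_add_mem_mem_orthogonal x
  obtain ⟨c, rfl⟩ := Submodule.mem_span_singleton.1 hy
  rw [map_add, map_smul, hv, hw z hz, LinearIsometryEquiv.coe_one, id_eq]

theorem map_mem_orthogonal_span_singleton {w : V} {A : V ≃ₗᵢ[ℝ] V} {c : ℝ} (hA : A v = c • v)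
    (hw : w ∈ (ℝ ∙ v)ᗮ) : A w ∈ (ℝ ∙ v)ᗮ := by
  rw [Submodule.mem_orthogonal_singleton_iff_inner_right] at hw ⊢
  rcases eq_or_ne c 0 with rfl | hc
  · rw [zero_smul, map_eq_zero_iff A A.injective] at hA
    rw [hA, inner_zero_left]
  · rw [← A.inner_map_map, hA, real_inner_smul_left] at hw
    exact (mul_eq_zero.1 hw).resolve_left hc

theorem exists_linearIsometry_complex_range_eq (hV : Module.finrank ℝ V = 3) (hv : v ≠ 0) :
    ∃ J : ℂ →ₗᵢ[ℝ] V, Set.range J = (ℝ ∙ v)ᗮ := by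
  have : Fact (Module.finrank ℝ V = 2 + 1) := ⟨hV⟩
  let e := Complex.isometryOfOrthonormal
    (OrthonormalBasis.fromOrthogonalSpanSingleton (𝕜 := ℝ) 2 hv)
  refine ⟨(ℝ ∙ v)ᗮ.subtypeₗᵢ.comp e.toLinearIsometry, ?_⟩
  rw [LinearIsometry.coe_comp, LinearIsometryEquiv.coe_toLinearIsometry, e.surjective.range_comp]
  exact Subtype.range_coe

variable {J : ℂ →ₗᵢ[ℝ] V}

theorem exists_planar_representation {G : Type*} [Group G] (hJ : Set.range J = (ℝ ∙ v)ᗮ)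
    {A : G →* (V ≃ₗᵢ[ℝ] V)} (hA : ∀ g, ∃ c : ℝ, A g v = c • v) :
    ∃ ρ : G →* ℂ ≃ₗᵢ[ℝ] ℂ, ∀ g z, J (ρ g z) = A g (J z) := by
  let α : G →* (V ≃ᵢ V) :=
    ⟨⟨fun g => (A g).toIsometryEquiv, by ext x; simp⟩, fun g h => by ext x; simp⟩
  obtain ⟨θ, hθ⟩ := exists_monoidHom_isometryEquiv J.isometry α fun g z => by
    obtain ⟨c, hc⟩ := hA g
    have hz : J z ∈ (ℝ ∙ v)ᗮ := hJ.le ⟨z, rfl⟩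
    exact hJ.ge (map_mem_orthogonal_span_singleton hc hz)
  refine ⟨linPart.comp θ, fun g z => ?_⟩
  have h0 : θ g 0 = 0 := J.injective (by rw [hθ, map_zero]; exact map_zero (A g))
  rw [MonoidHom.comp_apply, linPart_apply, h0, sub_zero, hθ]
  rfl

theorem trace_eq_of_rotation (hV : Module.finrank ℝ V = 3) (hv : ‖v‖ = 1)
    (hJ : Set.range J = (ℝ ∙ v)ᗮ) {A : V ≃ₗᵢ[ℝ] V} {c : ℝ} (hA : A v = c • v) {a : Circle}
    (ha : ∀ z, J (rotation a z) = A (J z)) :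
    LinearMap.trace ℝ V A.toLinearEquiv = c + 2 * (a : ℂ).re := by
  have : FiniteDimensional ℝ V := .of_finrank_pos (by lia)
  have hvJ (z) : ⟪v, J z⟫ = 0 :=
    Submodule.mem_orthogonal_singleton_iff_inner_right.1 (hJ.le ⟨z, rfl⟩)
  have hon : Orthonormal ℝ ![v, J 1, J Complex.I] := by
    rw [orthonormal_iff_ite]
    intro i j
    fin_cases i <;> fin_cases j <;>
      simp [hv, hvJ, real_inner_comm v, Complex.inner]
  let b := (basisOfOrthonormalOfCardEqFinrank hon (by simp [hV])).toOrthonormalBasis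
    (by rwa [coe_basisOfOrthonormalOfCardEqFinrank])
  have hb : ⇑b = ![v, J 1, J Complex.I] := by
    rw [Module.Basis.coe_toOrthonormalBasis, coe_basisOfOrthonormalOfCardEqFinrank]
  rw [LinearMap.trace_eq_sum_inner _ b, Fin.sum_univ_three, hb]
  simp [hA, ← ha, inner_smul_right, hv, Complex.inner, rotation_apply]
  ring

theorem circle_sq_add_one (a : Circle) : (a : ℂ) ^ 2 + 1 = (2 * (a : ℂ).re : ℝ) * a := by
  rw [← Complex.add_conj, ← Circle.coe_inv_eq_conj, add_mul, ← Circle.coe_mul a⁻¹, inv_mul_cancel,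
    Circle.coe_one, sq]

theorem orderOf_mem_crystallographicOrders {a : Circle} {k : ℤ} (h : 2 * (a : ℂ).re = k) :
    orderOf a ∈ crystallographicOrders := by
  have hsq := circle_sq_add_one a
  rw [h, Complex.ofReal_intCast] at hsq
  obtain ⟨hlow, hupp⟩ := abs_le.1 ((Complex.abs_re_le_norm a).trans_eq a.norm_coe)
  have hk : -2 ≤ k := by
    rify
    linarith
  have hk' : k ≤ 2 := by
    rify
    linarith
  have hdvd {m : ℕ} (hm : (a : ℂ) ^ m = 1) : orderOf a ∣ m :=
    orderOf_dvd_of_pow_eq_one (Circle.ext hm)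
  suffices orderOf a ∣ 4 ∨ orderOf a ∣ 6 by
    rw [show crystallographicOrders = Nat.divisors 4 ∪ Nat.divisors 6 by decide]
    simpa using this
  interval_cases k <;> push_cast at hsq
  · have ha : (a : ℂ) = -1 := eq_neg_of_add_eq_zero_left
      ((pow_eq_zero_iff two_ne_zero).1 (by linear_combination hsq))
    exact .inr (hdvd (by rw [ha]; norm_num))
  · exact .inr (hdvd (by linear_combination ((a : ℂ) ^ 3 + 1) * (a - 1) * hsq))
  · exact .inl (hdvd (by linear_combination ((a : ℂ) ^ 2 - 1) * hsq))
  · exact .inr (hdvd (by linear_combination ((a : ℂ) ^ 3 - 1) * (a + 1) * hsq))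
  · have ha : (a : ℂ) = 1 := sub_eq_zero.1
      ((pow_eq_zero_iff two_ne_zero).1 (by linear_combination hsq))
    exact .inr (hdvd (by rw [ha]; norm_num))

end InvariantLine

section DihedralAction

theorem exists_lineAction {n : ℕ} {G : Subgroup (Isom n)} {p v : E n} (hv : ‖v‖ = 1)
    (hinv : ∀ g ∈ G, g '' (Set.range fun t : ℝ => p + t • v) = Set.range fun t : ℝ => p + t • v) :
    ∃ θ : G →* (ℝ ≃ᵢ ℝ), ∀ g t, p + θ g t • v = (g : Isom n) (p + t • v) :=
  exists_monoidHom_isometryEquiv (isometry_add_smul hv) G.subtype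
    fun g t => (hinv g g.2).le ⟨_, ⟨t, rfl⟩, rfl⟩

section LineAction

variable {n : ℕ} {Γ G : Subgroup (Isom n)} {p v : E n} {θ : G →* (ℝ ≃ᵢ ℝ)}

theorem abs_lineAction_apply (hv : ‖v‖ = 1)
    (hθ : ∀ g t, p + θ g t • v = (g : Isom n) (p + t • v)) (g : G) (t : ℝ) :
    |θ g t| = ‖(g : Isom n) (p + t • v) - p‖ := by
  rw [← hθ, add_sub_cancel_left, norm_smul, hv, mul_one, Real.norm_eq_abs]

theorem abs_lineAction_apply_zero (hv : ‖v‖ = 1)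
    (hθ : ∀ g t, p + θ g t • v = (g : Isom n) (p + t • v)) (g : G) :
    |θ g 0| = ‖(g : Isom n) p - p‖ := by
  rw [abs_lineAction_apply hv hθ, zero_smul, add_zero]

theorem finite_setOf_lineAction (hv : ‖v‖ = 1)
    (hθ : ∀ g t, p + θ g t • v = (g : Isom n) (p + t • v)) (hΓ : IsCrystallographic Γ)
    (hGΓ : G ≤ Γ) (R : ℝ) :
    {g : G | |θ g 0| ≤ R}.Finite := by
  refine Set.Finite.of_finite_image ((hΓ.finite_setOf_apply_mem_closedBall p p R).subset ?_)
    Subtype.val_injective.injOn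
  rintro _ ⟨g, hg, rfl⟩
  exact ⟨hGΓ g.2, mem_closedBall_iff_norm.2 ((abs_lineAction_apply_zero hv hθ g).symm.trans_le hg)⟩

theorem nonempty_range_lineAction_mulEquiv (hv : ‖v‖ = 1)
    (hθ : ∀ g t, p + θ g t • v = (g : Isom n) (p + t • v)) (hΓ : IsCrystallographic Γ) (hGΓ : G ≤ Γ)
    (hcc : ∃ K : Set (E n), IsCompact K ∧ ∀ t : ℝ, ∃ g ∈ G, g (p + t • v) ∈ K)
    (hrefl : ∃ g, linPart (θ g) ≠ 1) : Nonempty (θ.range ≃* DihedralGroup 0) := by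
  refine nonempty_mulEquiv_dihedralGroup_zero ?_ ?_ ?_
  · obtain ⟨g, hg⟩ := hrefl
    exact ⟨θ g, ⟨g, rfl⟩, hg⟩
  · refine ((finite_setOf_lineAction hv hθ hΓ hGΓ 1).image θ).subset ?_
    rintro _ ⟨⟨g, rfl⟩, hg⟩
    exact ⟨g, mem_closedBall_zero_iff.1 hg, rfl⟩
  · obtain ⟨K, hK, h⟩ := hcc
    obtain ⟨C, hC⟩ := hK.isBounded.subset_closedBall p
    refine ⟨C, fun t => ?_⟩
    obtain ⟨g, hg, hgK⟩ := h t
    exact ⟨θ ⟨g, hg⟩, ⟨_, rfl⟩,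
      (abs_lineAction_apply hv hθ _ t).trans_le (mem_closedBall_iff_norm.1 (hC hgK))⟩

end LineAction

theorem disjoint_ker_lineAction_ker {V : Type*} [NormedAddCommGroup V] [InnerProductSpace ℝ V]
    {G : Subgroup (V ≃ᵢ V)} {p v : V} {J : ℂ →ₗᵢ[ℝ] V} (hJ : Set.range J = (ℝ ∙ v)ᗮ)
    {θ : G →* (ℝ ≃ᵢ ℝ)} (hθ : ∀ g t, p + θ g t • v = (g : V ≃ᵢ V) (p + t • v))
    {ρ : G →* ℂ ≃ₗᵢ[ℝ] ℂ} (hρ : ∀ g z, J (ρ g z) = linPart (g : V ≃ᵢ V) (J z)) :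
    Disjoint θ.ker ρ.ker := by
  rw [Subgroup.disjoint_def]
  intro g hg hg'
  rw [MonoidHom.mem_ker] at hg hg'
  have hlin : linPart (g : V ≃ᵢ V) = 1 := by
    refine linearIsometryEquiv_eq_one_of_orthogonal (v := v) ?_ fun w hw => ?_
    · rw [linPart_apply_of_forall_add_smul (hθ g), hg, map_one linPart,
        LinearIsometryEquiv.coe_one, id_eq, one_smul]
    · obtain ⟨z, rfl⟩ := hJ.ge hw
      rw [← hρ, hg', LinearIsometryEquiv.coe_one, id_eq]
  have hgp : (g : V ≃ᵢ V) p = p := by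
    have h := hθ g 0
    rw [hg, zero_smul, add_zero] at h
    rw [← h]
    simp
  exact Subtype.ext (eq_one_of_linPart_eq_one hlin hgp)

variable {Γ G : Subgroup (Isom 3)} {l : Set (E 3)}

theorem orderOf_mem_crystallographicOrders_of_rotation {p v : E 3} (hΓ : IsCrystallographic Γ)
    (hv : ‖v‖ = 1) {J : ℂ →ₗᵢ[ℝ] E 3} (hJ : Set.range J = (ℝ ∙ v)ᗮ) {γ : Isom 3} (hγ : γ ∈ Γ)
    {f : ℝ ≃ᵢ ℝ} (hf : ∀ t : ℝ, p + f t • v = γ (p + t • v)) {a : Circle}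
    (ha : ∀ z, J (rotation a z) = linPart γ (J z)) : orderOf a ∈ crystallographicOrders := by
  obtain ⟨k, hk⟩ := hΓ.exists_int_trace_linPart_eq hγ
  rw [trace_eq_of_rotation finrank_euclideanSpace_fin hv hJ (linPart_apply_of_forall_add_smul hf)
    ha] at hk
  rcases linearIsometryEquiv_real_eq_one_or_eq_neg (linPart f) with h | h
  · refine orderOf_mem_crystallographicOrders (k := k - 1) ?_
    rw [h, LinearIsometryEquiv.coe_one, id_eq] at hk
    push_cast
    linarith
  · refine orderOf_mem_crystallographicOrders (k := k + 1) ?_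
    rw [h, LinearIsometryEquiv.coe_neg] at hk
    push_cast
    linarith

theorem exists_dihedral_and_planar_action (hΓ : IsCrystallographic Γ) (hGΓ : G ≤ Γ)
    (hl : IsLine l) (hinv : ∀ g ∈ G, g '' l = l)
    (hcc : ∃ K : Set (E 3), IsCompact K ∧ K ⊆ l ∧ ∀ x ∈ l, ∃ g ∈ G, g x ∈ K)
    (hrefl : ∃ g ∈ G, ∃ p ∈ l, ∀ x ∈ l, g x = p + p - x) :
    ∃ (π : G →* DihedralGroup 0) (ρ : G →* ℂ ≃ₗᵢ[ℝ] ℂ), Function.Surjective π ∧ Finite π.ker ∧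
      Disjoint π.ker ρ.ker ∧ ∀ g a, ρ g = rotation a → orderOf a ∈ crystallographicOrders := by
  obtain ⟨r, hr, p, hp, hrp⟩ := hrefl
  obtain ⟨v, hv, rfl⟩ := hl.exists_range_eq hp
  obtain ⟨K, hK, -, hcc⟩ := hcc
  rw [Set.forall_mem_range] at hrp hcc
  have hv0 : v ≠ 0 := norm_ne_zero_iff.1 (hv.trans_ne one_ne_zero)
  obtain ⟨θ, hθ⟩ := exists_lineAction hv hinv
  have hθr : linPart (θ ⟨r, hr⟩) ≠ 1 := by
    have hneg (t) : θ ⟨r, hr⟩ t = -t :=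
      (isometry_add_smul (p := p) hv).injective ((hθ _ t).trans ((hrp t).trans (by module)))
    intro h
    have h1 := linPart_apply (θ ⟨r, hr⟩) 1
    rw [h, hneg, hneg, LinearIsometryEquiv.coe_one, id_eq] at h1
    norm_num at h1
  obtain ⟨e⟩ := nonempty_range_lineAction_mulEquiv hv hθ hΓ hGΓ ⟨K, hK, hcc⟩ ⟨_, hθr⟩
  obtain ⟨J, hJ⟩ := exists_linearIsometry_complex_range_eq finrank_euclideanSpace_fin hv0
  obtain ⟨ρ, hρ⟩ := exists_planar_representation hJ (A := linPart.comp G.subtype)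
    fun g => ⟨_, linPart_apply_of_forall_add_smul (hθ g)⟩
  let π : G →* DihedralGroup 0 := e.toMonoidHom.comp θ.rangeRestrict
  have hker : π.ker = θ.ker :=
    (MonoidHom.ker_mulEquiv_comp _ e).trans θ.ker_rangeRestrict
  refine ⟨π, ρ, e.surjective.comp θ.rangeRestrict_surjective, ?_, ?_, fun g a hg => ?_⟩
  · rw [hker]
    refine ((finite_setOf_lineAction hv hθ hΓ hGΓ 0).subset fun g hg => ?_).to_subtype
    have hg' : θ g = 1 := hg
    simp [hg']
  · rw [hker]
    exact disjoint_ker_lineAction_ker hJ hθ hρ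
  · exact orderOf_mem_crystallographicOrders_of_rotation hΓ hv hJ (hGΓ g.2) (hθ g) (hg ▸ hρ g)

end DihedralAction

/-- Proposition 3.2. Let `Γ` be a 3-crystallographic group and `G ≤ Γ` a
subgroup leaving a line `l` invariant with a dihedral cocompact action on `l` (the action on `l`
is cocompact and some element of `G` acts on `l` as a reflection).  Then `G` is isomorphic to an
amalgamated free product `Gᵃ *_F Gᵇ` for one of the listed triples `(F, Gᵃ, Gᵇ)`. -/
theorem dihedral_action_classification
    (Γ G : Subgroup (Isom 3)) (hΓ : IsCrystallographic Γ) (hGΓ : G ≤ Γ)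
    (l : Set (E 3)) (hl : IsLine l)
    (hinv : ∀ g ∈ G, g '' l = l)
    (hcc : ∃ K : Set (E 3), IsCompact K ∧ K ⊆ l ∧ ∀ x ∈ l, ∃ g ∈ G, g x ∈ K)
    (hrefl : ∃ g ∈ G, ∃ p ∈ l, ∀ x ∈ l, g x = p + p - x) :
    IsAmalgam G PUnit (Zc 2) (Zc 2) ∨
    IsAmalgam G (Zc 2) (Zc 4) (Zc 4) ∨
    IsAmalgam G (Zc 2) (DihedralGroup 2) (Zc 4) ∨
    IsAmalgam G (Zc 2) (DihedralGroup 2) (DihedralGroup 2) ∨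
    IsAmalgam G (Zc 3) (Zc 6) (Zc 6) ∨
    IsAmalgam G (Zc 3) (DihedralGroup 3) (Zc 6) ∨
    IsAmalgam G (Zc 3) (DihedralGroup 3) (DihedralGroup 3) ∨
    IsAmalgam G (Zc 4) (Zc 4 × Zc 2) (Zc 4 × Zc 2) ∨
    IsAmalgam G (Zc 4) (DihedralGroup 4) (Zc 4 × Zc 2) ∨
    IsAmalgam G (Zc 4) (DihedralGroup 4) (DihedralGroup 4) ∨
    IsAmalgam G (Zc 6) (Zc 6 × Zc 2) (Zc 6 × Zc 2) ∨
    IsAmalgam G (Zc 6) (DihedralGroup 6) (Zc 6 × Zc 2) ∨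
    IsAmalgam G (Zc 6) (DihedralGroup 6) (DihedralGroup 6) ∨
    IsAmalgam G (DihedralGroup 2) (DihedralGroup 2 × Zc 2) (DihedralGroup 2 × Zc 2) ∨
    IsAmalgam G (DihedralGroup 2) (DihedralGroup 4) (DihedralGroup 2 × Zc 2) ∨
    IsAmalgam G (DihedralGroup 2) (DihedralGroup 4) (DihedralGroup 4) ∨
    IsAmalgam G (DihedralGroup 3) (DihedralGroup 3 × Zc 2) (DihedralGroup 3 × Zc 2) ∨
    IsAmalgam G (DihedralGroup 4) (DihedralGroup 4 × Zc 2) (DihedralGroup 4 × Zc 2) ∨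
    IsAmalgam G (DihedralGroup 6) (DihedralGroup 6 × Zc 2) (DihedralGroup 6 × Zc 2) := by
  obtain ⟨π, ρ, hπ, hfin, hdisj, hord⟩ :=
    exists_dihedral_and_planar_action hΓ hGΓ hl hinv hcc hrefl
  have hinj : Function.Injective (ρ.domRestrict π.ker) := by
    rw [← MonoidHom.ker_eq_bot_iff, MonoidHom.ker_domRestrict, subgroupOf_eq_bot]
    exact hdisj.symm
  have hker : IsPlanarPointGroup π.ker := isPlanarPointGroup_of_injective hinj fun g => hord g
  have hext := isPlanarExtension_comap_zpowers_sr hπ hdisj hord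
  rcases hker.hasPlanarExtensions with h | h | h | h | h | h | h | h | h <;>
    rcases h.isAmalgam hπ hext with h | h | h <;>
    simp only [h, true_or, or_true]
end
end
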